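/- arXiv:1510.04387 — 2 statements merged into one kernel-verified Lean document; each statement's English description precedes it below -/
import Mathlib

section
/- Assume the Generalized Riemann Hypothesis for Dedekind zeta functions of quadratic number fields (equivalently, for Dirichlet L-functions of real Dirichlet characters). Then there exists an absolute constant C such that for every positive integer d, every real non-principal Dirichlet character χ modulo d, and every real x ≥ 2, the number of primes p ≤ x with χ(p) = 1 equals (1/2)·Li(x) plus an error of absolute value at most C·x^{1/2}·log(d·x), where Li(x) = ∫_2^x dt/log t is the logarithmic integral. -/
open scoped Classical

/-- The Generalized Riemann Hypothesis for Dirichlet L-functions of real Dirichlet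
characters (equivalently, for Dedekind zeta functions of quadratic number fields). -/
def GRHreal : Prop :=
  ∀ (N : ℕ) [NeZero N] (χ : DirichletCharacter ℂ N), (∀ a : ZMod N, (χ a).im = 0) →
    ∀ s : ℂ, DirichletCharacter.LFunction χ s = 0 → 0 < s.re → s.re < 1 → s.re = 1 / 2

/-- The logarithmic integral `Li(x) = ∫_2^x dt / log t`. -/
noncomputable def Li (x : ℝ) : ℝ := ∫ t in (2 : ℝ)..x, 1 / Real.log t

/-!
Put `F(s) = (s - 1) ζ(s) L(s, χ)`, an entire function. For `Re s > 1`, `-F'/F(s) + 1/(s - 1)` is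
the Dirichlet series of `aₙ = Λ(n) (1 + χ(n)) ≥ 0`. Let `w` be a trapezoidal weight, equal to `1`
on `[2, x]` and supported in `[1, x + √x]`, with Mellin transform `k`, and let `σ = 1/2 + ε` with
`ε = 1 / (2 log x)`.

Instead of `k`, integrate the reflected kernel `K(s) = k(s) + k(2σ - s)` against `F'/F`. To the
right of `1` the second term contributes nothing, because `w` vanishes on `u ≤ 1`; on the line
`Re s = σ`, where `2σ - s` is the conjugate of `s`, the kernel is the real number `2 Re k`, so that
only `Re (F'/F)` enters there. Under the Riemann Hypothesis, Landau's local lemma writes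
`Re (F'/F)` on this line as a sum of Poisson kernels, one for each nearby zero and each of total
mass at most `π`, up to an error `O(log d(|t| + 2))`. Hence the mean of `|Re (F'/F)|` over a unit
interval is `O(log d(|t| + 2))` uniformly in `ε`, and no individual zero close to the line does
any harm.

This gives `∑ aₙ w(n) = ∫ w + O(√x log x log (dx))`. Since `aₙ ≥ 0`, the smoothing can be removed
at the cost of `O(√x)`; prime powers contribute `O(√x log x)`, and partial summation divides by
`log`.
-/

section LocalLemma

open Metric ComplexConjugate

variable {R r M B : ℝ} {f g : ℂ → ℂ} {ρ z : ℂ}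

/-- The reciprocal of the Blaschke factor of the disc `‖z‖ < R` at `ρ`, multiplied by `z - ρ`:
it has no zeros in the disc and the modulus of `z - ρ` on the boundary circle. -/
noncomputable def reflectedFactor (R : ℝ) (ρ z : ℂ) : ℂ := (R ^ 2 - conj ρ * z) / R

lemma differentiable_reflectedFactor (R : ℝ) (ρ : ℂ) : Differentiable ℂ (reflectedFactor R ρ) := by
  unfold reflectedFactor
  fun_prop

lemma norm_reflectedFactor_of_norm_eq (hR : 0 < R) (hz : ‖z‖ = R) :
    ‖reflectedFactor R ρ z‖ = ‖z - ρ‖ := by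
  have hconj : (R : ℂ) ^ 2 - conj ρ * z = z * conj (z - ρ) := by
    have hsq : z * conj z = (R : ℂ) ^ 2 := by
      rw [Complex.mul_conj, Complex.normSq_eq_norm_sq, hz, Complex.ofReal_pow]
    rw [map_sub, mul_sub, hsq, mul_comm z (conj ρ)]
  rw [reflectedFactor, hconj, norm_div, norm_mul, Complex.norm_conj, hz, Complex.norm_real,
    Real.norm_of_nonneg hR.le, mul_div_cancel_left₀ _ hR.ne']

lemma sq_sub_sq_le_norm_sq_sub_conj_mul (hρ : ‖ρ‖ ≤ r) (hz : ‖z‖ ≤ r) :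
    R ^ 2 - r ^ 2 ≤ ‖(R : ℂ) ^ 2 - conj ρ * z‖ := by
  have hprod : ‖conj ρ * z‖ ≤ r ^ 2 := by
    rw [norm_mul, Complex.norm_conj, sq]
    exact mul_le_mul hρ hz (norm_nonneg _) ((norm_nonneg _).trans hρ)
  have hR : ‖(R : ℂ) ^ 2‖ = R ^ 2 := by
    rw [norm_pow, Complex.norm_real, Real.norm_eq_abs, sq_abs]
  linarith [norm_sub_norm_le ((R : ℂ) ^ 2) (conj ρ * z)]

lemma sq_sub_sq_pos_of_norm_le (hrR : r < R) (hz : ‖z‖ ≤ r) : 0 < R ^ 2 - r ^ 2 := by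
  nlinarith [(norm_nonneg _).trans hz]

lemma reflectedFactor_ne_zero (hrR : r < R) (hρ : ‖ρ‖ ≤ r) (hz : ‖z‖ ≤ r) :
    reflectedFactor R ρ z ≠ 0 := by
  have hR : 0 < R := ((norm_nonneg _).trans hz).trans_lt hrR
  refine div_ne_zero (norm_pos_iff.mp ?_) (by exact_mod_cast hR.ne')
  exact (sq_sub_sq_pos_of_norm_le hrR hz).trans_le (sq_sub_sq_le_norm_sq_sub_conj_mul hρ hz)

lemma norm_logDeriv_reflectedFactor_le (hrR : r < R) (hρ : ‖ρ‖ ≤ r) (hz : ‖z‖ ≤ r) :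
    ‖logDeriv (reflectedFactor R ρ) z‖ ≤ r / (R ^ 2 - r ^ 2) := by
  have hR : (R : ℂ) ≠ 0 := by exact_mod_cast (((norm_nonneg _).trans hz).trans_lt hrR).ne'
  have hderiv : HasDerivAt (reflectedFactor R ρ) (-conj ρ / R) z := by
    simpa using! (((hasDerivAt_id z).const_mul (conj ρ)).const_sub ((R : ℂ) ^ 2)).div_const (R : ℂ)
  rw [logDeriv_apply, hderiv.deriv, reflectedFactor, div_div_div_cancel_right₀ hR, norm_div,
    norm_neg, Complex.norm_conj]
  exact div_le_div₀ ((norm_nonneg _).trans hρ) hρ (sq_sub_sq_pos_of_norm_le hrR hz)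
    (sq_sub_sq_le_norm_sq_sub_conj_mul hρ hz)

lemma exists_divide_zero (hrR : r < R) (hf : DiffContOnCl ℂ f (ball 0 R))
    (hM : ∀ z ∈ closedBall 0 R, ‖f z‖ ≤ M) (hρ : ρ ∈ closedBall 0 r) (hfρ : f ρ = 0)
    (hf0 : f 0 ≠ 0) :
    ∃ g : ℂ → ℂ, DiffContOnCl ℂ g (ball 0 R) ∧ (∀ z ∈ closedBall 0 R, ‖g z‖ ≤ M) ∧
      ‖f 0‖ * (R / r) ≤ ‖g 0‖ ∧ ∀ z, f z * reflectedFactor R ρ z = g z * (z - ρ) := by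
  rw [mem_closedBall_zero_iff] at hρ
  have hr : 0 < r := (norm_pos_iff.mpr (by rintro rfl; exact hf0 hfρ)).trans_le hρ
  have hR : 0 < R := hr.trans hrR
  have hnhds : ball (0 : ℂ) R ∈ nhds ρ :=
    isOpen_ball.mem_nhds (mem_ball_zero_iff.mpr (hρ.trans_lt hrR))
  have hfactor (z : ℂ) : f z = (z - ρ) * dslope f ρ z := by
    simpa [hfρ] using (sub_smul_dslope f ρ z).symm
  have hslope : DiffContOnCl ℂ (dslope f ρ) (ball 0 R) :=
    ⟨(Complex.differentiableOn_dslope hnhds).mpr hf.1,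
      (continuousOn_dslope (Filter.mem_of_superset hnhds subset_closure)).mpr
        ⟨hf.2, hf.1.differentiableAt hnhds⟩⟩
  have hg : DiffContOnCl ℂ (fun z ↦ dslope f ρ z * reflectedFactor R ρ z) (ball 0 R) :=
    hslope.smul (differentiable_reflectedFactor R ρ).diffContOnCl
  refine ⟨_, hg, fun z hz ↦ ?_, ?_, fun z ↦ by rw [hfactor z]; ring⟩
  · rw [← closure_ball _ hR.ne'] at hz
    refine Complex.norm_le_of_forall_mem_frontier_norm_le isBounded_ball hg (fun w hw ↦ ?_) hz
    rw [frontier_ball _ hR.ne', mem_sphere_zero_iff_norm] at hw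
    rw [norm_mul, norm_reflectedFactor_of_norm_eq hR hw, mul_comm, ← norm_mul, ← hfactor]
    exact hM w (mem_closedBall_zero_iff.mpr hw.le)
  · have hreflected : ‖reflectedFactor R ρ 0‖ = R := by
      simp [reflectedFactor, sq, abs_of_pos hR]
    rw [norm_mul, hreflected, hfactor 0, norm_mul, zero_sub, norm_neg]
    calc ‖ρ‖ * ‖dslope f ρ 0‖ * (R / r) ≤ r * ‖dslope f ρ 0‖ * (R / r) := by gcongr
      _ = ‖dslope f ρ 0‖ * R := by field_simp

lemma exists_blaschke_factorization_of_lt_pow (hr : 0 < r) (hrR : r < R)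
    (n : ℕ) : ∀ f : ℂ → ℂ, DiffContOnCl ℂ f (ball 0 R) → (∀ z ∈ closedBall 0 R, ‖f z‖ ≤ M) →
      f 0 ≠ 0 → M < ‖f 0‖ * (R / r) ^ n →
    ∃ (Z : Multiset ℂ) (g : ℂ → ℂ), DiffContOnCl ℂ g (ball 0 R) ∧
      (∀ z ∈ closedBall 0 R, ‖g z‖ ≤ M) ∧ (∀ z ∈ closedBall 0 r, g z ≠ 0) ∧
      ‖f 0‖ * (R / r) ^ Z.card ≤ ‖g 0‖ ∧ (∀ ρ ∈ Z, ρ ∈ closedBall 0 r) ∧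
      ∀ z, f z * (Z.map (reflectedFactor R · z)).prod = g z * (Z.map (z - ·)).prod := by
  induction n with
  | zero =>
    intro f _ hM _ hlt
    have hle := hM 0 (mem_closedBall_self (hr.trans hrR).le)
    rw [pow_zero, mul_one] at hlt
    exact absurd hle hlt.not_ge
  | succ n ih =>
    intro f hf hM hf0 hlt
    by_cases! hzero : ∀ z ∈ closedBall 0 r, f z ≠ 0
    · exact ⟨0, f, hf, hM, hzero, by simp, by simp, by simp⟩
    obtain ⟨ρ, hρ, hfρ⟩ := hzero
    obtain ⟨f₁, hf₁, hM₁, hgrow, hfac⟩ := exists_divide_zero hrR hf hM hρ hfρ hf0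
    have hratio : 0 < R / r := div_pos (hr.trans hrR) hr
    have hf₁0 : f₁ 0 ≠ 0 :=
      norm_pos_iff.mp ((mul_pos (norm_pos_iff.mpr hf0) hratio).trans_le hgrow)
    have hlt₁ : M < ‖f₁ 0‖ * (R / r) ^ n := hlt.trans_le <| by
      rw [pow_succ', ← mul_assoc]
      gcongr
    obtain ⟨Z, g, hg, hgM, hgne, hg0, hZ, hprod⟩ := ih f₁ hf₁ hM₁ hf₁0 hlt₁
    refine ⟨ρ ::ₘ Z, g, hg, hgM, hgne, ?_, ?_, fun z ↦ ?_⟩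
    · rw [Multiset.card_cons, pow_succ', ← mul_assoc]
      exact le_trans (by gcongr) hg0
    · simpa only [Multiset.forall_mem_cons] using ⟨hρ, hZ⟩
    · rw [Multiset.map_cons, Multiset.map_cons, Multiset.prod_cons, Multiset.prod_cons]
      linear_combination (Z.map (reflectedFactor R · z)).prod * hfac z + (z - ρ) * hprod z

lemma logDeriv_multiset_prod {ι : Type*} {F : ι → ℂ → ℂ} {Z : Multiset ι}
    (hne : ∀ i ∈ Z, F i z ≠ 0) (hd : ∀ i ∈ Z, DifferentiableAt ℂ (F i) z) :
    DifferentiableAt ℂ (fun w ↦ (Z.map (F · w)).prod) z ∧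
      logDeriv (fun w ↦ (Z.map (F · w)).prod) z = (Z.map fun i ↦ logDeriv (F i) z).sum := by
  induction Z using Multiset.induction_on with
  | empty => simp
  | cons i Z ih =>
    rw [Multiset.forall_mem_cons] at hne hd
    obtain ⟨hprod, hlog⟩ := ih hne.2 hd.2
    have hprod0 : (Z.map (F · z)).prod ≠ 0 :=
      Multiset.prod_ne_zero (by simpa using hne.2)
    simp only [Multiset.map_cons, Multiset.prod_cons, Multiset.sum_cons]
    exact ⟨hd.1.mul hprod, by rw [logDeriv_mul z hne.1 hprod0 hd.1 hprod, hlog]⟩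

lemma apply_eq_zero_of_mul_reflectedFactor_prod_eq {Z : Multiset ℂ} (hrR : r < R)
    (hZ : ∀ ρ ∈ Z, ρ ∈ closedBall 0 r)
    (hprod : ∀ z, f z * (Z.map (reflectedFactor R · z)).prod = g z * (Z.map (z - ·)).prod)
    (hρ : ρ ∈ Z) : f ρ = 0 := by
  have hzero : (Z.map (ρ - ·)).prod = 0 :=
    Multiset.prod_eq_zero (Multiset.mem_map.mpr ⟨ρ, hρ, sub_self ρ⟩)
  have hreflected : (Z.map (reflectedFactor R · ρ)).prod ≠ 0 := by
    refine Multiset.prod_ne_zero fun h ↦ ?_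
    obtain ⟨τ, hτ, hτ0⟩ := Multiset.mem_map.mp h
    exact reflectedFactor_ne_zero hrR (mem_closedBall_zero_iff.mp (hZ τ hτ))
      (mem_closedBall_zero_iff.mp (hZ ρ hρ)) hτ0
  exact (mul_eq_zero.mp ((hprod ρ).trans (by rw [hzero, mul_zero]))).resolve_right hreflected

lemma logDeriv_add_sum_logDeriv_reflectedFactor {Z : Multiset ℂ} (hrR : r < R)
    (hf : DifferentiableAt ℂ f z) (hg : DifferentiableAt ℂ g z) (hgz : g z ≠ 0)
    (hZ : ∀ ρ ∈ Z, ρ ∈ closedBall 0 r)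
    (hprod : ∀ z, f z * (Z.map (reflectedFactor R · z)).prod = g z * (Z.map (z - ·)).prod)
    (hz : ‖z‖ ≤ r) (hfz : f z ≠ 0) :
    logDeriv f z + (Z.map fun ρ ↦ logDeriv (reflectedFactor R ρ) z).sum =
      logDeriv g z + (Z.map fun ρ ↦ 1 / (z - ρ)).sum := by
  have hsub (ρ : ℂ) (hρ : ρ ∈ Z) : z - ρ ≠ 0 := fun h ↦ hfz <| by
    rw [sub_eq_zero.mp h, apply_eq_zero_of_mul_reflectedFactor_prod_eq hrR hZ hprod hρ]
  have hne (ρ : ℂ) (hρ : ρ ∈ Z) : reflectedFactor R ρ z ≠ 0 :=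
    reflectedFactor_ne_zero hrR (mem_closedBall_zero_iff.mp (hZ ρ hρ)) hz
  obtain ⟨hdR, hlogR⟩ :=
    logDeriv_multiset_prod hne fun ρ _ ↦ differentiable_reflectedFactor R ρ z
  obtain ⟨hdL, hlogL⟩ := logDeriv_multiset_prod (F := fun ρ w ↦ w - ρ) hsub
    fun ρ _ ↦ by fun_prop
  have hR0 : (Z.map (reflectedFactor R · z)).prod ≠ 0 := Multiset.prod_ne_zero (by simpa using hne)
  have hL0 : (Z.map (z - ·)).prod ≠ 0 :=
    Multiset.prod_ne_zero fun h ↦ by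
      obtain ⟨ρ, hρ, h0⟩ := Multiset.mem_map.mp h
      exact hsub ρ hρ h0
  have hlinear (ρ : ℂ) : logDeriv (fun w : ℂ ↦ w - ρ) z = 1 / (z - ρ) := by
    simp [logDeriv_apply]
  have hlog := congrArg (logDeriv · z) (funext hprod)
  rw [logDeriv_mul z hfz hR0 hf hdR, logDeriv_mul z hgz hL0 hg hdL, hlogR, hlogL] at hlog
  simpa only [hlinear] using hlog

lemma norm_multiset_sum_map_le_card_mul {Z : Multiset ℂ} {F : ℂ → ℂ} {b : ℝ}
    (hF : ∀ ρ ∈ Z, ‖F ρ‖ ≤ b) : ‖(Z.map F).sum‖ ≤ Z.card * b := by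
  calc ‖(Z.map F).sum‖ ≤ ((Z.map F).map norm).sum := norm_multiset_sum_le _
    _ ≤ (Z.map F).card • b := by
      refine (Multiset.sum_le_card_nsmul _ b ?_).trans_eq (by rw [Multiset.card_map])
      simpa using hF
    _ = Z.card * b := by rw [Multiset.card_map, nsmul_eq_mul]

lemma exists_eq_mul_exp_of_ne_zero (hr : 0 < r) (hg : DifferentiableOn ℂ g (ball 0 r))
    (hne : ∀ z ∈ ball 0 r, g z ≠ 0) :
    ∃ h : ℂ → ℂ, h 0 = 0 ∧ (∀ z ∈ ball 0 r, HasDerivAt h (logDeriv g z) z) ∧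
      ∀ z ∈ ball 0 r, g z = g 0 * Complex.exp (h z) := by
  have hlog : DifferentiableOn ℂ (logDeriv g) (ball 0 r) := (hg.deriv isOpen_ball).div hg hne
  obtain ⟨h, hh0, hh⟩ := hlog.isExactOn_ball.with_val_at 0 0
  refine ⟨h, hh0, hh, fun z hz ↦ ?_⟩
  have hderiv : ∀ w ∈ ball 0 r, HasDerivAt (fun z ↦ g z * Complex.exp (-h z)) 0 w := by
    intro w hw
    refine ((hg.differentiableAt (isOpen_ball.mem_nhds hw)).hasDerivAt.mul
      (hh w hw).neg.cexp).congr_deriv ?_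
    have := hne w hw
    rw [logDeriv_apply, Pi.neg_apply]
    field_simp
    ring
  have hconst := isOpen_ball.is_const_of_deriv_eq_zero (convex_ball (0 : ℂ) r).isPreconnected
    (fun w hw ↦ (hderiv w hw).differentiableAt.differentiableWithinAt)
    (fun w hw ↦ (hderiv w hw).deriv) hz (mem_ball_self hr)
  have hconst' : g z * Complex.exp (-h z) = g 0 := by simpa [hh0] using hconst
  rw [← hconst', mul_assoc, ← Complex.exp_add, neg_add_cancel, Complex.exp_zero, mul_one]

lemma norm_logDeriv_le_of_ne_zero {r₁ : ℝ} (hB : 0 < B) (hr : 0 < r) (hr₁ : r < r₁)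
    (hg : DifferentiableOn ℂ g (ball 0 r₁)) (hne : ∀ z ∈ ball 0 r₁, g z ≠ 0)
    (hM : ∀ z ∈ ball 0 r₁, ‖g z‖ ≤ ‖g 0‖ * Real.exp B) (hz : ‖z‖ ≤ r) :
    ‖logDeriv g z‖ ≤ 4 * B * (r + r₁) / (r₁ - r) ^ 2 := by
  obtain ⟨h, hh0, hh, hexp⟩ := exists_eq_mul_exp_of_ne_zero (hr.trans hr₁) hg hne
  have hdiff : DifferentiableOn ℂ h (ball 0 r₁) := fun w hw ↦
    (hh w hw).differentiableAt.differentiableWithinAt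
  have hre : Set.MapsTo h (ball 0 r₁) {w | w.re ≤ B} := fun w hw ↦ by
    have hw' := hM w hw
    rw [hexp w hw, norm_mul, Complex.norm_exp] at hw'
    exact Real.exp_le_exp.mp (le_of_mul_le_mul_left hw'
      (norm_pos_iff.mpr (hne 0 (mem_ball_self (hr.trans hr₁)))))
  set δ := (r₁ - r) / 2 with hδ
  have hδ0 : 0 < δ := by linarith
  have hnorm {w : ℂ} (hw : w ∈ closedBall z δ) : ‖w‖ ≤ (r + r₁) / 2 := by
    linarith [norm_le_norm_add_norm_sub' w z, mem_closedBall_iff_norm.mp hw]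
  have hball {w : ℂ} (hw : w ∈ closedBall z δ) : w ∈ ball 0 r₁ :=
    mem_ball_zero_iff.mpr ((hnorm hw).trans_lt (by linarith))
  have hh_le (w : ℂ) (hw : w ∈ sphere z δ) : ‖h w‖ ≤ 2 * B * (r + r₁) / (r₁ - r) := by
    have hw' := sphere_subset_closedBall hw
    calc ‖h w‖ ≤ 2 * B * ‖w‖ / (r₁ - ‖w‖) :=
          Complex.borelCaratheodory_zero hB hdiff hre (hr.trans hr₁) (hball hw') hh0
      _ ≤ 2 * B * ((r + r₁) / 2) / (r₁ - (r + r₁) / 2) := by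
          have := hnorm hw'
          have := hr.trans hr₁
          gcongr
          linarith
      _ = 2 * B * (r + r₁) / (r₁ - r) := by
          have : r₁ - r ≠ 0 := by linarith
          have : r₁ - (r + r₁) / 2 = (r₁ - r) / 2 := by ring
          rw [this]
          field_simp
  have hcauchy := Complex.norm_deriv_le_of_forall_mem_sphere_norm_le hδ0
    ((hdiff.mono fun w hw ↦ hball (by rwa [closure_ball _ hδ0.ne'] at hw)).diffContOnCl) hh_le
  rw [(hh z (hball (mem_closedBall_self hδ0.le))).deriv] at hcauchy
  refine hcauchy.trans_eq ?_
  have : r₁ - r ≠ 0 := by linarith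
  rw [hδ]
  field_simp
  ring

lemma exists_blaschke_factorization (hr : 0 < r) (hrR : r < R) (hf : DiffContOnCl ℂ f (ball 0 R))
    (hf0 : f 0 ≠ 0) (hM : ∀ z ∈ closedBall 0 R, ‖f z‖ ≤ ‖f 0‖ * Real.exp B) :
    ∃ (Z : Multiset ℂ) (g : ℂ → ℂ), DiffContOnCl ℂ g (ball 0 R) ∧
      (∀ z ∈ closedBall 0 R, ‖g z‖ ≤ ‖g 0‖ * Real.exp B) ∧ (∀ z ∈ closedBall 0 r, g z ≠ 0) ∧
      Z.card ≤ B / Real.log (R / r) ∧ (∀ ρ ∈ Z, ρ ∈ closedBall 0 r) ∧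
      ∀ z, f z * (Z.map (reflectedFactor R · z)).prod = g z * (Z.map (z - ·)).prod := by
  have hratio : 1 < R / r := (one_lt_div hr).mpr hrR
  have hf0' : 0 < ‖f 0‖ := norm_pos_iff.mpr hf0
  obtain ⟨n, hn⟩ := pow_unbounded_of_one_lt (Real.exp B) hratio
  obtain ⟨Z, g, hg, hgM, hgne, hg0, hZ, hprod⟩ :=
    exists_blaschke_factorization_of_lt_pow hr hrR n f hf hM hf0 (by gcongr)
  have hfg : ‖f 0‖ ≤ ‖g 0‖ := (le_mul_of_one_le_right hf0'.le (one_le_pow₀ hratio.le)).trans hg0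
  have hpow : (R / r) ^ Z.card ≤ Real.exp B := le_of_mul_le_mul_left
    (hg0.trans (hgM 0 (mem_closedBall_self (hr.trans hrR).le))) hf0'
  refine ⟨Z, g, hg, fun z hz ↦ (hgM z hz).trans (by gcongr), hgne, ?_, hZ, hprod⟩
  rw [le_div_iff₀ (Real.log_pos hratio), ← Real.log_pow]
  exact (Real.log_le_iff_le_exp (by positivity)).mpr hpow

lemma exists_zeros_logDeriv_approx_at_zero {r₁ : ℝ} (hr : 0 < r) (hr₁ : r < r₁) (hR : r₁ < R)
    (hB : 0 < B) (hf : DiffContOnCl ℂ f (ball 0 R)) (hf0 : f 0 ≠ 0)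
    (hM : ∀ z ∈ closedBall 0 R, ‖f z‖ ≤ ‖f 0‖ * Real.exp B) :
    ∃ Z : Multiset ℂ, Z.card ≤ B / Real.log (R / r₁) ∧ (∀ ρ ∈ Z, ρ ∈ closedBall 0 r₁ ∧ f ρ = 0) ∧
      ∀ z ∈ closedBall 0 r, f z ≠ 0 → ‖logDeriv f z - (Z.map fun ρ ↦ 1 / (z - ρ)).sum‖ ≤
        4 * B * (r + r₁) / (r₁ - r) ^ 2 + B / Real.log (R / r₁) * (r₁ / (R ^ 2 - r₁ ^ 2)) := by
  obtain ⟨Z, g, hg, hgM, hgne, hcard, hZ, hprod⟩ :=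
    exists_blaschke_factorization (hr.trans hr₁) hR hf hf0 hM
  have hsub : ball (0 : ℂ) r₁ ⊆ ball 0 R := ball_subset_ball hR.le
  refine ⟨Z, hcard, fun ρ hρ ↦
    ⟨hZ ρ hρ, apply_eq_zero_of_mul_reflectedFactor_prod_eq hR hZ hprod hρ⟩, fun z hz hfz ↦ ?_⟩
  rw [mem_closedBall_zero_iff] at hz
  have hz₁ : ‖z‖ ≤ r₁ := hz.trans hr₁.le
  have hnhds : ball (0 : ℂ) R ∈ nhds z :=
    isOpen_ball.mem_nhds (mem_ball_zero_iff.mpr (hz₁.trans_lt hR))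
  have hlog := logDeriv_add_sum_logDeriv_reflectedFactor hR (hf.1.differentiableAt hnhds)
    (hg.1.differentiableAt hnhds) (hgne z (mem_closedBall_zero_iff.mpr hz₁)) hZ hprod hz₁ hfz
  rw [show logDeriv f z - (Z.map fun ρ ↦ 1 / (z - ρ)).sum =
    logDeriv g z - (Z.map fun ρ ↦ logDeriv (reflectedFactor R ρ) z).sum by
      linear_combination hlog]
  refine (norm_sub_le _ _).trans (add_le_add ?_ ?_)
  · exact norm_logDeriv_le_of_ne_zero hB hr hr₁ (hg.1.mono hsub)
      (fun w hw ↦ hgne w (ball_subset_closedBall hw))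
      (fun w hw ↦ hgM w (ball_subset_closedBall (hsub hw))) hz
  · have hr₁R : 0 ≤ r₁ / (R ^ 2 - r₁ ^ 2) :=
      div_nonneg (hr.trans hr₁).le (sq_sub_sq_pos_of_norm_le hR hz₁).le
    refine (norm_multiset_sum_map_le_card_mul fun ρ hρ ↦ norm_logDeriv_reflectedFactor_le hR
      (mem_closedBall_zero_iff.mp (hZ ρ hρ)) hz₁).trans ?_
    gcongr

theorem exists_zeros_logDeriv_approx {r₁ : ℝ} (hr : 0 < r) (hr₁ : r < r₁) (hR : r₁ < R) :
    ∃ C : ℝ, 0 < C ∧ ∀ (f : ℂ → ℂ) (c : ℂ) (B : ℝ), 0 < B → DiffContOnCl ℂ f (ball c R) →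
      f c ≠ 0 → (∀ z ∈ closedBall c R, ‖f z‖ ≤ ‖f c‖ * Real.exp B) →
      ∃ Z : Multiset ℂ, Z.card ≤ C * B ∧ (∀ ρ ∈ Z, ρ ∈ closedBall c r₁ ∧ f ρ = 0) ∧
        ∀ z ∈ closedBall c r, f z ≠ 0 →
          ‖logDeriv f z - (Z.map fun ρ ↦ 1 / (z - ρ)).sum‖ ≤ C * B := by
  set A := 4 * (r + r₁) / (r₁ - r) ^ 2 with hA
  set D := 1 / Real.log (R / r₁) with hD
  set E := r₁ / (R ^ 2 - r₁ ^ 2) with hE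
  have hA0 : 0 < A := by have := sub_pos.mpr hr₁; have := hr.trans hr₁; positivity
  have hD0 : 0 < D := one_div_pos.mpr (Real.log_pos ((one_lt_div (hr.trans hr₁)).mpr hR))
  have hE0 : 0 < E := div_pos (hr.trans hr₁) (by nlinarith)
  refine ⟨D + (A + D * E), by positivity, fun f c B hB hf hfc hM ↦ ?_⟩
  have hball (z : ℂ) : z ∈ closedBall 0 R ↔ z + c ∈ closedBall c R := by simp
  obtain ⟨Z, hcard, hZ, happrox⟩ := exists_zeros_logDeriv_approx_at_zero (f := fun z ↦ f (z + c))
    hr hr₁ hR hB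
    (hf.comp (differentiable_id.add_const c).diffContOnCl fun z hz ↦ by simpa using hz)
    (by simpa using hfc) (fun z hz ↦ by simpa using hM (z + c) ((hball z).mp hz))
  refine ⟨Z.map (· + c), ?_, ?_, fun z hz hfz ↦ ?_⟩
  · calc ((Z.map (· + c)).card : ℝ) ≤ B / Real.log (R / r₁) := by rwa [Multiset.card_map]
      _ = D * B := by rw [hD]; ring
      _ ≤ (D + (A + D * E)) * B := by gcongr; linarith [mul_pos hD0 hE0]
  · simpa [dist_eq_norm] using hZ
  · have hz' := happrox (z - c) (by simpa [dist_eq_norm] using hz) (by simpa using hfz)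
    have hshift : logDeriv (fun w ↦ f (w + c)) (z - c) = logDeriv f z := by
      rw [logDeriv_apply, logDeriv_apply, deriv_comp_add_const, sub_add_cancel]
    rw [hshift] at hz'
    simp only [Multiset.map_map, Function.comp_def, ← sub_sub, sub_right_comm z _ c]
    calc _ ≤ _ := hz'
      _ = (A + D * E) * B := by rw [hA, hD, hE]; ring
      _ ≤ (D + (A + D * E)) * B :=
          mul_le_mul_of_nonneg_right (le_add_of_nonneg_left hD0.le) hB.le

end LocalLemma

section Size

open Complex MeasureTheory Set Filter Asymptotics Topology DirichletCharacter

variable {A : ℝ → ℂ} {D : ℝ} {s : ℂ}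

/-- The Abel-summation transform `∫₁^∞ A(t) t^{-s-1} dt`, which continues a Dirichlet series whose
summatory function is bounded (possibly after removing a main term) to the half-plane `0 < re s`. -/
noncomputable def abelTransform (A : ℝ → ℂ) (s : ℂ) : ℂ := ∫ t in Ioi (1 : ℝ), A t * t ^ (-(s + 1))

lemma norm_abelTransform_le (hD : ∀ t, ‖A t‖ ≤ D) (hs : 0 < s.re) :
    ‖abelTransform A s‖ ≤ D / s.re := by
  calc ‖abelTransform A s‖ ≤ ∫ t in Ioi (1 : ℝ), D * t ^ (-s.re - 1) := by
        refine norm_integral_le_of_norm_le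
          ((integrableOn_Ioi_rpow_of_lt (by linarith) zero_lt_one).const_mul _)
          ((ae_restrict_iff' measurableSet_Ioi).mpr (ae_of_all _ fun t ht ↦ ?_))
        have ht₀ : 0 < t := zero_lt_one.trans ht
        rw [norm_mul, norm_cpow_eq_rpow_re_of_pos ht₀, neg_re, add_re, one_re, neg_add']
        gcongr
        exact hD t
    _ = D / s.re := by
        rw [integral_const_mul, integral_Ioi_rpow_of_lt (by linarith) zero_lt_one, Real.one_rpow,
          sub_add_cancel, neg_div_neg_eq, mul_one_div]

lemma abelTransform_eq_mellin (A : ℝ → ℂ) (s : ℂ) :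
    abelTransform A s = mellin (indicator (Ioi 1) A) (-s) := by
  rw [abelTransform, mellin, ← inter_eq_self_of_subset_right (Ioi_subset_Ioi zero_le_one),
    ← setIntegral_indicator measurableSet_Ioi,
    inter_eq_self_of_subset_right (Ioi_subset_Ioi zero_le_one)]
  congr with t
  by_cases ht : t ∈ Ioi (1 : ℝ)
  · rw [indicator_of_mem ht, indicator_of_mem ht, smul_eq_mul, mul_comm, neg_add']
  · rw [indicator_of_notMem ht, indicator_of_notMem ht, smul_zero]

lemma differentiableAt_abelTransform (hA : Measurable A) (hD : ∀ t, ‖A t‖ ≤ D) (hs : 0 < s.re) :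
    DifferentiableAt ℂ (abelTransform A) s := by
  have hbound (t : ℝ) : ‖indicator (Ioi 1) A t‖ ≤ D :=
    (norm_indicator_le_norm_self A t).trans (hD t)
  have hloc : LocallyIntegrableOn (indicator (Ioi 1) A) (Ioi 0) :=
    ((locallyIntegrable_const D).mono (hA.indicator measurableSet_Ioi).aestronglyMeasurable
      (ae_of_all _ fun t ↦ (hbound t).trans (Real.le_norm_self D))).locallyIntegrableOn _
  have hbot : indicator (Ioi 1) A =O[𝓝[>] 0] (fun t : ℝ ↦ t ^ (-(-s.re - 1))) := by
    refine IsBigO.of_bound 0 ?_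
    filter_upwards [Ioo_mem_nhdsGT zero_lt_one] with t ht
    rw [indicator_of_notMem (notMem_Ioi.mpr ht.2.le), norm_zero, zero_mul]
  have htop : indicator (Ioi 1) A =O[atTop] (fun t : ℝ ↦ t ^ (-(0 : ℝ))) :=
    IsBigO.of_bound D (Eventually.of_forall fun t ↦ by simpa using hbound t)
  have hmellin : DifferentiableAt ℂ (mellin (indicator (Ioi 1) A)) (-s) :=
    mellin_differentiableAt_of_isBigO_rpow hloc htop (by simpa using hs) hbot (by simp)
  rw [funext (abelTransform_eq_mellin A)]
  exact hmellin.comp s differentiableAt_id.neg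

lemma eq_of_eq_of_one_lt_re {f g : ℂ → ℂ} (hf : ∀ s : ℂ, 0 < s.re → DifferentiableAt ℂ f s)
    (hg : ∀ s : ℂ, 0 < s.re → DifferentiableAt ℂ g s) (hfg : ∀ s : ℂ, 1 < s.re → f s = g s)
    (hs : 0 < s.re) : f s = g s := by
  have hopen (a : ℝ) : IsOpen {s : ℂ | a < s.re} := isOpen_lt continuous_const continuous_re
  have hanalytic {h : ℂ → ℂ} (hh : ∀ s : ℂ, 0 < s.re → DifferentiableAt ℂ h s) :
      AnalyticOnNhd ℂ h {s : ℂ | 0 < s.re} :=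
    DifferentiableOn.analyticOnNhd (fun s hs ↦ (hh s hs).differentiableWithinAt) (hopen 0)
  refine (hanalytic hf).eqOn_of_preconnected_of_eventuallyEq (hanalytic hg)
    (convex_halfSpace_re_gt 0).isPreconnected (z₀ := 2) (by simp) ?_ hs
  filter_upwards [(hopen 1).mem_nhds (show (2 : ℂ) ∈ {s : ℂ | 1 < s.re} by simp)] with z hz
    using hfg z hz

section CharacterSum

variable {d : ℕ} [NeZero d] {χ : DirichletCharacter ℂ d}

lemma sum_range_apply_add_eq_zero (hχ : χ ≠ 1) (m : ℕ) :
    ∑ k ∈ Finset.range d, χ ((m + k : ℕ) : ZMod d) = 0 := by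
  calc ∑ k ∈ Finset.range d, χ ((m + k : ℕ) : ZMod d) = ∑ a : ZMod d, χ (m + a) :=
        Finset.sum_bij' (fun k _ ↦ (k : ZMod d)) (fun a _ ↦ a.val) (fun _ _ ↦ Finset.mem_univ _)
          (fun a _ ↦ Finset.mem_range.mpr a.val_lt)
          (fun k hk ↦ ZMod.val_cast_of_lt (Finset.mem_range.mp hk))
          (fun a _ ↦ ZMod.natCast_zmod_val a) (fun k _ ↦ by rw [Nat.cast_add])
    _ = ∑ a : ZMod d, χ a := Fintype.sum_equiv (Equiv.addLeft (m : ZMod d)) _ _ fun _ ↦ rfl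
    _ = 0 := MulChar.sum_eq_zero_of_ne_one hχ

lemma norm_sum_range_le (hχ : χ ≠ 1) (n : ℕ) :
    ‖∑ k ∈ Finset.range n, χ (k : ZMod d)‖ ≤ d := by
  induction n using Nat.strong_induction_on with
  | _ n ih =>
    rcases lt_or_ge n d with hn | hn
    · calc ‖∑ k ∈ Finset.range n, χ (k : ZMod d)‖ ≤ ∑ _k ∈ Finset.range n, (1 : ℝ) :=
            norm_sum_le_of_le _ fun _ _ ↦ χ.norm_le_one _
        _ ≤ d := by simpa using hn.le
    · rw [← Nat.sub_add_cancel hn, Finset.sum_range_add, sum_range_apply_add_eq_zero hχ, add_zero]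
      exact ih (n - d) (Nat.sub_lt_of_pos_le (NeZero.pos d) hn)

lemma norm_sum_Icc_le (hχ : χ ≠ 1) (n : ℕ) :
    ‖∑ k ∈ Finset.Icc 1 n, χ (k : ZMod d)‖ ≤ d + 1 := by
  have hsplit : ∑ k ∈ Finset.Icc 1 n, χ (k : ZMod d) =
      ∑ k ∈ Finset.range (n + 1), χ (k : ZMod d) - χ ((0 : ℕ) : ZMod d) := by
    rw [Finset.range_eq_Ico, Finset.sum_eq_sum_Ico_succ_bot n.succ_pos, add_sub_cancel_left]
    rfl
  rw [hsplit]
  exact (norm_sub_le _ _).trans (add_le_add (norm_sum_range_le hχ _) (χ.norm_le_one _))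

lemma norm_LFunction_le (hχ : χ ≠ 1) (hs : 0 < s.re) :
    ‖LFunction χ s‖ ≤ ‖s‖ * ((d + 1) / s.re) := by
  set A : ℝ → ℂ := fun t ↦ ∑ k ∈ Finset.Icc 1 ⌊t⌋₊, χ (k : ZMod d)
  have hA : Measurable A := (measurable_from_nat
    (f := fun n : ℕ ↦ ∑ k ∈ Finset.Icc 1 n, χ (k : ZMod d))).comp Nat.measurable_floor
  have hD (t : ℝ) : ‖A t‖ ≤ d + 1 := norm_sum_Icc_le hχ _
  have habel : LFunction χ s = s * abelTransform A s := by
    refine eq_of_eq_of_one_lt_re (g := fun s ↦ s * abelTransform A s)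
      (fun s _ ↦ differentiable_LFunction hχ s)
      (fun s hs ↦ differentiableAt_id.mul (differentiableAt_abelTransform hA hD hs))
      (fun s hs ↦ ?_) hs
    rw [LFunction_eq_LSeries χ hs]
    refine LSeries_eq_mul_integral _ le_rfl (by linarith) (LSeriesSummable_of_one_lt_re χ hs)
      (IsBigO.of_bound (d + 1) (Eventually.of_forall fun n ↦ ?_))
    simpa using norm_sum_Icc_le hχ n
  rw [habel, norm_mul]
  gcongr
  exact norm_abelTransform_le hD hs

end CharacterSum

lemma LFunctionTrivChar₁_one_of_ne (hs : s ≠ 1) :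
    LFunctionTrivChar₁ 1 s = (s - 1) * riemannZeta s := by
  simp [LFunctionTrivChar₁, Function.update_of_ne hs, LFunctionTrivChar]

lemma norm_fract_le_one (t : ℝ) : ‖((Int.fract t : ℝ) : ℂ)‖ ≤ 1 := by
  rw [norm_real, Real.norm_of_nonneg (Int.fract_nonneg t)]
  exact (Int.fract_lt_one t).le

lemma measurable_ofReal_fract : Measurable fun t : ℝ ↦ ((Int.fract t : ℝ) : ℂ) :=
  measurable_ofReal.comp measurable_fract

lemma integral_floor_mul_cpow (hs : 1 < s.re) :
    ∫ t in Ioi (1 : ℝ), (⌊t⌋₊ : ℂ) * (t : ℂ) ^ (-(s + 1)) =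
      1 / (s - 1) - abelTransform (fun t ↦ (Int.fract t : ℝ)) s := by
  have hfloor : ∀ t ∈ Ioi (1 : ℝ), (⌊t⌋₊ : ℂ) * (t : ℂ) ^ (-(s + 1)) =
      (t : ℂ) ^ (-s) - (Int.fract t : ℝ) * (t : ℂ) ^ (-(s + 1)) := by
    intro t ht
    have ht₀ : 0 < t := zero_lt_one.trans ht
    have hfract : (⌊t⌋₊ : ℂ) = t - (Int.fract t : ℝ) := by
      have hreal : (⌊t⌋₊ : ℝ) = t - Int.fract t := by
        rw [natCast_floor_eq_intCast_floor ht₀.le, Int.self_sub_fract]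
      exact_mod_cast congrArg ofReal hreal
    rw [hfract, sub_mul, show -s = 1 + -(s + 1) by ring,
      cpow_add _ _ (by exact_mod_cast ht₀.ne'), cpow_one]
  have hmain : IntegrableOn (fun t : ℝ ↦ (t : ℂ) ^ (-s)) (Ioi 1) :=
    integrableOn_Ioi_cpow_of_lt (by simpa using hs) zero_lt_one
  have hfract : IntegrableOn (fun t : ℝ ↦ (Int.fract t : ℝ) * (t : ℂ) ^ (-(s + 1))) (Ioi 1) :=
    Integrable.bdd_mul (integrableOn_Ioi_cpow_of_lt (by simp; linarith) zero_lt_one)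
      measurable_ofReal_fract.aestronglyMeasurable (ae_of_all _ norm_fract_le_one)
  rw [setIntegral_congr_fun measurableSet_Ioi hfloor, integral_sub hmain hfract,
    integral_Ioi_cpow_of_lt (by simpa using hs) zero_lt_one, abelTransform, ofReal_one, one_cpow,
    neg_div, ← div_neg, neg_add_eq_sub, neg_sub]

lemma LFunctionTrivChar₁_one_eq_abelTransform (hs : 0 < s.re) :
    LFunctionTrivChar₁ 1 s = s - s * (s - 1) * abelTransform (fun t ↦ (Int.fract t : ℝ)) s := by
  refine eq_of_eq_of_one_lt_re
    (g := fun s ↦ s - s * (s - 1) * abelTransform (fun t ↦ (Int.fract t : ℝ)) s)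
    (fun s _ ↦ differentiable_LFunctionTrivChar₁ 1 s) (fun s hs ↦ ?_) (fun s hs ↦ ?_) hs
  · have := differentiableAt_abelTransform measurable_ofReal_fract norm_fract_le_one hs
    fun_prop
  · have hs₁ : s ≠ 1 := by
      rintro rfl
      simp at hs
    have hs₁' : s - 1 ≠ 0 := sub_ne_zero.mpr hs₁
    have hone : (fun n : ℕ ↦ ∑ k ∈ Finset.Icc 1 n, ‖(1 : ℕ → ℂ) k‖) =O[atTop]
        fun n ↦ (n : ℝ) ^ (1 : ℝ) :=
      IsBigO.of_bound 1 (Eventually.of_forall fun n ↦ by simp)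
    rw [LFunctionTrivChar₁_one_of_ne hs₁, ← LSeries_one_eq_riemannZeta hs,
      LSeries_eq_mul_integral' 1 zero_le_one hs hone]
    simp only [Pi.one_apply, Finset.sum_const, Nat.card_Icc, add_tsub_cancel_right, nsmul_eq_mul,
      mul_one]
    rw [integral_floor_mul_cpow hs]
    field_simp

lemma norm_LFunctionTrivChar₁_one_le (hs : 0 < s.re) :
    ‖LFunctionTrivChar₁ 1 s‖ ≤ ‖s‖ + ‖s‖ * ‖s - 1‖ / s.re := by
  rw [LFunctionTrivChar₁_one_eq_abelTransform hs]
  refine (norm_sub_le _ _).trans (add_le_add_right ?_ _)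
  rw [norm_mul, norm_mul, ← mul_one_div]
  gcongr
  exact norm_abelTransform_le norm_fract_le_one hs

lemma tsum_one_div_add_two_sq : ∑' n : ℕ, 1 / ((n + 2 : ℕ) : ℝ) ^ 2 = Real.pi ^ 2 / 6 - 1 := by
  have hsplit := hasSum_zeta_two.summable.sum_add_tsum_nat_add 2
  rw [hasSum_zeta_two.tsum_eq, Finset.sum_range_succ, Finset.sum_range_one] at hsplit
  norm_num at hsplit ⊢
  linarith

lemma norm_LSeries_sub_one_le {f : ℕ → ℂ} (hf₁ : f 1 = 1) (hf : ∀ n, ‖f n‖ ≤ 1) (hs : s.re = 2) :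
    ‖LSeries f s - 1‖ ≤ Real.pi ^ 2 / 6 - 1 := by
  have hterm (n : ℕ) : ‖LSeries.term f s n‖ ≤ 1 / (n : ℝ) ^ 2 := by
    rcases Nat.eq_zero_or_pos n with rfl | hn
    · simp
    · rw [LSeries.term_of_ne_zero hn.ne', norm_div, norm_natCast_cpow_of_pos hn, hs, Real.rpow_two]
      gcongr
      exact hf n
  have hsum : LSeriesSummable f s := .of_norm_bounded hasSum_zeta_two.summable hterm
  have htail : LSeries f s - 1 = ∑' n, LSeries.term f s (n + 2) := by
    rw [LSeries, ← hsum.sum_add_tsum_nat_add 2, Finset.sum_range_succ, Finset.sum_range_one]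
    simp [LSeries.term, hf₁]
  rw [htail, ← tsum_one_div_add_two_sq]
  exact tsum_of_norm_bounded ((summable_nat_add_iff 2).mpr hasSum_zeta_two.summable).hasSum
    fun n ↦ hterm (n + 2)

lemma one_fourth_le_norm_LFunction {d : ℕ} [NeZero d] (χ : DirichletCharacter ℂ d)
    (hs : s.re = 2) : 1 / 4 ≤ ‖LFunction χ s‖ := by
  have hclose : ‖LFunction χ s - 1‖ ≤ Real.pi ^ 2 / 6 - 1 := by
    rw [LFunction_eq_LSeries χ (by rw [hs]; exact one_lt_two)]
    exact norm_LSeries_sub_one_le (by simp) (fun n ↦ χ.norm_le_one n) hs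
  have hpi : Real.pi ^ 2 / 6 - 1 ≤ 3 / 4 := by nlinarith [Real.pi_lt_d2, Real.pi_pos]
  have hone := norm_sub_norm_le (1 : ℂ) (1 - LFunction χ s)
  rw [sub_sub_cancel, norm_one, norm_sub_rev] at hone
  linarith

end Size

section QuadraticZeta

open Metric Complex MeasureTheory Set DirichletCharacter ArithmeticFunction

variable {d : ℕ} [NeZero d] {χ : DirichletCharacter ℂ d} {s z : ℂ} {T : ℝ}

lemma re_vertical (σ v : ℝ) : ((σ : ℂ) + v * I).re = σ := by simp

lemma im_vertical (σ v : ℝ) : ((σ : ℂ) + v * I).im = v := by simp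

/-- The entire function `(s - 1) ζ(s) L(s, χ)`. When `χ` is the primitive character of a quadratic
field it is `(s - 1)` times the Dedekind zeta function of that field. -/
noncomputable def quadZeta₁ (χ : DirichletCharacter ℂ d) (s : ℂ) : ℂ :=
  LFunctionTrivChar₁ 1 s * LFunction χ s

/-- The Riemann hypothesis for `ζ(s) L(s, χ)`, including the absence of zeros on `1 ≤ re s`. -/
def SatisfiesRH (χ : DirichletCharacter ℂ d) : Prop :=
  ∀ s : ℂ, 0 < s.re → quadZeta₁ χ s = 0 → s.re = 1 / 2

/-- The logarithm `log (d (|T| + 2))` of the analytic conductor at height `T` of a Dirichlet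
character modulo `d`. -/
noncomputable def logConductor (d : ℕ) (T : ℝ) : ℝ := Real.log (d * (|T| + 2))

lemma one_le_modulus (d : ℕ) [NeZero d] : (1 : ℝ) ≤ d := by exact_mod_cast NeZero.pos d

lemma two_le_conductor (d : ℕ) [NeZero d] (T : ℝ) : 2 ≤ d * (|T| + 2) := by
  nlinarith [abs_nonneg T, one_le_modulus d]

lemma logConductor_pos (d : ℕ) [NeZero d] (T : ℝ) : 0 < logConductor d T :=
  Real.log_pos (by linarith [two_le_conductor d T])

lemma differentiable_quadZeta₁ (hχ : χ ≠ 1) : Differentiable ℂ (quadZeta₁ χ) :=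
  (differentiable_LFunctionTrivChar₁ 1).mul (differentiable_LFunction hχ)

lemma quadZeta₁_ne_zero_of_one_le_re (hχ : χ ≠ 1) (hs : 1 ≤ s.re) : quadZeta₁ χ s ≠ 0 := by
  refine mul_ne_zero ?_ (LFunction_ne_zero_of_one_le_re χ (Or.inl hχ) hs)
  rcases eq_or_ne s 1 with rfl | hs₁
  · exact LFunctionTrivChar₁_apply_one_ne_zero 1
  · rw [LFunctionTrivChar₁_one_of_ne hs₁]
    exact mul_ne_zero (sub_ne_zero.mpr hs₁) (riemannZeta_ne_zero_of_one_le_re hs)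

lemma satisfiesRH_of_zeros (hχ : χ ≠ 1)
    (hζ : ∀ s : ℂ, riemannZeta s = 0 → 0 < s.re → s.re < 1 → s.re = 1 / 2)
    (hL : ∀ s : ℂ, LFunction χ s = 0 → 0 < s.re → s.re < 1 → s.re = 1 / 2) : SatisfiesRH χ := by
  intro s hs hzero
  have hs₁ : s.re < 1 := not_le.mp fun h ↦ quadZeta₁_ne_zero_of_one_le_re hχ h hzero
  have hne : s ≠ 1 := by
    rintro rfl
    simp at hs₁
  rw [quadZeta₁, LFunctionTrivChar₁_one_of_ne hne, mul_assoc] at hzero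
  rcases (mul_eq_zero.mp hzero).resolve_left (sub_ne_zero.mpr hne) |> mul_eq_zero.mp with h | h
  · exact hζ s h hs hs₁
  · exact hL s h hs hs₁

lemma norm_quadZeta₁_le (hχ : χ ≠ 1) (hz : z ∈ closedBall (2 + T * I) (9 / 5)) :
    ‖quadZeta₁ χ z‖ ≤ 520 * (d * (|T| + 2) ^ 3) := by
  rw [mem_closedBall, dist_eq] at hz
  have hd := one_le_modulus d
  have hre : 1 / 5 ≤ z.re := by
    have := (abs_le.mp ((abs_re_le_norm _).trans hz)).1
    simp only [sub_re, add_re, re_ofNat, mul_re, ofReal_re, I_re, ofReal_im, I_im] at this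
    linarith
  set τ := |T| + 2
  have hτ₂ : 2 ≤ τ := le_add_of_nonneg_left (abs_nonneg T)
  have hcentre : ‖2 + T * I‖ ≤ τ := by
    refine (norm_add_le _ _).trans_eq ?_
    rw [norm_mul, norm_I, norm_real, Real.norm_eq_abs, Complex.norm_ofNat, mul_one, add_comm]
  have hnorm : ‖z‖ ≤ 2 * τ := by linarith [norm_le_norm_add_norm_sub' z (2 + T * I)]
  have hnorm₁ : ‖z - 1‖ ≤ 5 / 2 * τ := by
    have := norm_sub_le z 1
    rw [norm_one] at this
    linarith [norm_le_norm_add_norm_sub' z (2 + T * I)]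
  have hL : ‖LFunction χ z‖ ≤ 20 * (τ * d) := by
    calc ‖LFunction χ z‖ ≤ ‖z‖ * ((d + 1) / z.re) := norm_LFunction_le hχ (by linarith)
      _ ≤ 2 * τ * ((d + d) / (1 / 5)) := by gcongr
      _ = 20 * (τ * d) := by ring
  have hζ : ‖LFunctionTrivChar₁ 1 z‖ ≤ 26 * τ ^ 2 := by
    calc ‖LFunctionTrivChar₁ 1 z‖ ≤ ‖z‖ + ‖z‖ * ‖z - 1‖ / z.re :=
          norm_LFunctionTrivChar₁_one_le (by linarith)
      _ ≤ 2 * τ + 2 * τ * (5 / 2 * τ) / (1 / 5) := by gcongr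
      _ ≤ 26 * τ ^ 2 := by nlinarith
  calc ‖quadZeta₁ χ z‖ ≤ 26 * τ ^ 2 * (20 * (τ * d)) := by rw [quadZeta₁, norm_mul]; gcongr
    _ = 520 * (d * τ ^ 3) := by ring

lemma one_sixteenth_le_norm_quadZeta₁ (χ : DirichletCharacter ℂ d) (hs : s.re = 2) :
    1 / 16 ≤ ‖quadZeta₁ χ s‖ := by
  have hne : s ≠ 1 := by
    rintro rfl
    norm_num at hs
  have hζ : 1 / 4 ≤ ‖riemannZeta s‖ := by
    rw [← LFunction_modOne_eq (χ := 1)]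
    exact one_fourth_le_norm_LFunction 1 hs
  have hsub : 1 ≤ ‖s - 1‖ := by
    have := re_le_norm (s - 1)
    rw [sub_re, hs, one_re] at this
    linarith
  rw [quadZeta₁, LFunctionTrivChar₁_one_of_ne hne, norm_mul, norm_mul]
  calc (1 : ℝ) / 16 = 1 * (1 / 4) * (1 / 4) := by norm_num
    _ ≤ ‖s - 1‖ * ‖riemannZeta s‖ * ‖LFunction χ s‖ := by
      gcongr
      exact one_fourth_le_norm_LFunction χ hs

lemma norm_quadZeta₁_le_mul_exp_logConductor (hχ : χ ≠ 1)
    (hz : z ∈ closedBall (2 + T * I) (9 / 5)) :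
    ‖quadZeta₁ χ z‖ ≤ ‖quadZeta₁ χ (2 + T * I)‖ * Real.exp (17 * logConductor d T) := by
  set y : ℝ := d * (|T| + 2) with hy
  have hy₂ : 2 ≤ y := two_le_conductor d T
  have hexp : Real.exp (17 * logConductor d T) = y ^ 17 := by
    rw [logConductor, mul_comm, Real.exp_mul, Real.exp_log (by linarith), ← hy]
    norm_cast
  have hcube : d * (|T| + 2) ^ 3 ≤ y ^ 3 := by
    rw [hy, mul_pow]
    gcongr
    exact le_self_pow₀ (one_le_modulus d) three_ne_zero
  calc ‖quadZeta₁ χ z‖ ≤ 520 * y ^ 3 := (norm_quadZeta₁_le hχ hz).trans (by gcongr)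
    _ ≤ 1 / 16 * (2 ^ 14 * y ^ 3) := by nlinarith [show 0 ≤ y ^ 3 by positivity]
    _ ≤ 1 / 16 * (y ^ 14 * y ^ 3) := by gcongr
    _ = 1 / 16 * y ^ 17 := by ring
    _ ≤ ‖quadZeta₁ χ (2 + T * I)‖ * Real.exp (17 * logConductor d T) := by
      rw [hexp]
      gcongr
      exact one_sixteenth_le_norm_quadZeta₁ χ (by simp)

lemma mem_closedBall_of_abs_im_sub_le (hs : 1 / 2 < s.re) (hs₂ : s.re ≤ 2)
    (him : |s.im - T| ≤ 1 / 2) : s ∈ closedBall (2 + T * I) (16 / 10) := by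
  rw [mem_closedBall, dist_eq, norm_def, Real.sqrt_le_iff, normSq_apply]
  simp only [sub_re, add_re, re_ofNat, mul_re, ofReal_re, I_re, mul_zero, ofReal_im, I_im, mul_one,
    sub_self, add_zero, sub_im, add_im, im_ofNat, mul_im, zero_add]
  exact ⟨by norm_num, by nlinarith [abs_le.mp him]⟩

theorem exists_zeros_logDeriv_quadZeta₁_approx :
    ∃ C : ℝ, 0 < C ∧ ∀ (d : ℕ) [NeZero d] (χ : DirichletCharacter ℂ d), χ ≠ 1 → SatisfiesRH χ →
      ∀ T : ℝ, ∃ Z : Multiset ℂ, Z.card ≤ C * logConductor d T ∧ (∀ ρ ∈ Z, ρ.re = 1 / 2) ∧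
        ∀ s : ℂ, 1 / 2 < s.re → s.re ≤ 2 → |s.im - T| ≤ 1 / 2 →
          ‖logDeriv (quadZeta₁ χ) s - (Z.map fun ρ ↦ 1 / (s - ρ)).sum‖ ≤
            C * logConductor d T := by
  obtain ⟨C, hC, happrox⟩ := exists_zeros_logDeriv_approx (r := 16 / 10) (r₁ := 17 / 10)
    (R := 9 / 5) (by norm_num) (by norm_num) (by norm_num)
  refine ⟨C * 17, by positivity, fun d _ χ hχ hRH T ↦ ?_⟩
  obtain ⟨Z, hcard, hZ, hlog⟩ := happrox (quadZeta₁ χ) (2 + T * I) (17 * logConductor d T)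
    (mul_pos (by norm_num) (logConductor_pos d T)) (differentiable_quadZeta₁ hχ).diffContOnCl
    (quadZeta₁_ne_zero_of_one_le_re hχ (by simp))
    (fun z hz ↦ norm_quadZeta₁_le_mul_exp_logConductor hχ hz)
  refine ⟨Z, by rwa [mul_assoc], fun ρ hρ ↦ ?_, fun s hs hs₂ him ↦ ?_⟩
  · obtain ⟨hball, hzero⟩ := hZ ρ hρ
    rw [mem_closedBall, dist_eq] at hball
    have hre := (abs_le.mp ((abs_re_le_norm _).trans hball)).1
    simp only [sub_re, add_re, re_ofNat, mul_re, ofReal_re, I_re, ofReal_im, I_im] at hre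
    exact hRH ρ (by linarith) hzero
  · rw [mul_assoc]
    refine hlog s (mem_closedBall_of_abs_im_sub_le hs hs₂ him) fun hzero ↦ ?_
    linarith [hRH s (by linarith) hzero]

theorem exists_norm_logDeriv_quadZeta₁_le :
    ∃ C : ℝ, 0 < C ∧ ∀ (d : ℕ) [NeZero d] (χ : DirichletCharacter ℂ d), χ ≠ 1 → SatisfiesRH χ →
      ∀ s : ℂ, 1 / 2 < s.re → s.re ≤ 2 →
        ‖logDeriv (quadZeta₁ χ) s‖ ≤ C * logConductor d s.im * (1 + 1 / (s.re - 1 / 2)) := by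
  obtain ⟨C, hC, happrox⟩ := exists_zeros_logDeriv_quadZeta₁_approx
  refine ⟨C, hC, fun d _ χ hχ hRH s hs hs₂ ↦ ?_⟩
  obtain ⟨Z, hcard, hZ, hlog⟩ := happrox d χ hχ hRH s.im
  have := sub_pos.mpr hs
  have hsum : ‖(Z.map fun ρ ↦ 1 / (s - ρ)).sum‖ ≤ Z.card * (1 / (s.re - 1 / 2)) := by
    refine norm_multiset_sum_map_le_card_mul fun ρ hρ ↦ ?_
    rw [norm_div, norm_one]
    gcongr
    simpa only [sub_re, hZ ρ hρ] using re_le_norm (s - ρ)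
  calc ‖logDeriv (quadZeta₁ χ) s‖
      ≤ ‖(Z.map fun ρ ↦ 1 / (s - ρ)).sum‖ +
          ‖logDeriv (quadZeta₁ χ) s - (Z.map fun ρ ↦ 1 / (s - ρ)).sum‖ :=
        norm_le_norm_add_norm_sub' _ _
    _ ≤ C * logConductor d s.im * (1 / (s.re - 1 / 2)) + C * logConductor d s.im :=
        add_le_add (hsum.trans (by gcongr)) (hlog s hs hs₂ (by simp))
    _ = C * logConductor d s.im * (1 + 1 / (s.re - 1 / 2)) := by ring

/-- The mass at `v` of the Poisson kernels of the half-plane at height `ε`, one for each point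
of `Z`; it is the real part of `∑ 1 / (s - ρ)` at `s = 1 / 2 + ε + i v` when all `ρ` lie on the
critical line. -/
noncomputable def poissonSum (Z : Multiset ℂ) (ε v : ℝ) : ℝ :=
  (Z.map fun ρ ↦ ε / (ε ^ 2 + (v - ρ.im) ^ 2)).sum

lemma poissonSum_nonneg {ε : ℝ} (hε : 0 ≤ ε) (Z : Multiset ℂ) (v : ℝ) : 0 ≤ poissonSum Z ε v := by
  refine Multiset.sum_nonneg fun x hx ↦ ?_
  obtain ⟨ρ, -, rfl⟩ := Multiset.mem_map.mp hx
  positivity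

lemma continuous_poissonKernel {ε : ℝ} (hε : 0 < ε) (γ : ℝ) :
    Continuous fun v ↦ ε / (ε ^ 2 + (v - γ) ^ 2) :=
  continuous_const.div (by fun_prop) fun v ↦ by positivity

lemma integral_poissonKernel_le {ε : ℝ} (hε : 0 < ε) (γ a b : ℝ) :
    ∫ v in a..b, ε / (ε ^ 2 + (v - γ) ^ 2) ≤ Real.pi := by
  have hderiv (v : ℝ) :
      HasDerivAt (fun v ↦ Real.arctan ((v - γ) / ε)) (ε / (ε ^ 2 + (v - γ) ^ 2)) v := by
    refine ((((hasDerivAt_id v).sub_const γ).div_const ε).arctan).congr_deriv ?_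
    simp only [id]
    field_simp
  rw [intervalIntegral.integral_eq_sub_of_hasDerivAt (fun v _ ↦ hderiv v)
    ((continuous_poissonKernel hε γ).intervalIntegrable a b)]
  linarith [Real.arctan_lt_pi_div_two ((b - γ) / ε), Real.neg_pi_div_two_lt_arctan ((a - γ) / ε)]

lemma continuous_poissonSum {ε : ℝ} (hε : 0 < ε) (Z : Multiset ℂ) :
    Continuous (poissonSum Z ε) :=
  continuous_multiset_sum _ fun ρ _ ↦ continuous_poissonKernel hε ρ.im

lemma integral_poissonSum_le {ε : ℝ} (hε : 0 < ε) (a b : ℝ) (Z : Multiset ℂ) :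
    ∫ v in a..b, poissonSum Z ε v ≤ Z.card * Real.pi := by
  induction Z using Multiset.induction_on with
  | empty => simp [poissonSum]
  | cons ρ Z ih =>
    have hcons (v : ℝ) : poissonSum (ρ ::ₘ Z) ε v =
        ε / (ε ^ 2 + (v - ρ.im) ^ 2) + poissonSum Z ε v := by
      simp [poissonSum]
    simp only [hcons]
    rw [intervalIntegral.integral_add ((continuous_poissonKernel hε ρ.im).intervalIntegrable a b)
      ((continuous_poissonSum hε Z).intervalIntegrable a b), Multiset.card_cons]
    push_cast
    linarith [integral_poissonKernel_le hε ρ.im a b]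

lemma re_sum_one_div_sub {ε : ℝ} (v : ℝ) {Z : Multiset ℂ} (hZ : ∀ ρ ∈ Z, ρ.re = 1 / 2) :
    ((Z.map fun ρ ↦ 1 / (((1 / 2 + ε : ℝ) : ℂ) + v * I - ρ)).sum).re = poissonSum Z ε v := by
  rw [← coe_reAddGroupHom, map_multiset_sum, Multiset.map_map, poissonSum]
  refine congrArg Multiset.sum (Multiset.map_congr rfl fun ρ hρ ↦ ?_)
  have hre : (((1 / 2 + ε : ℝ) : ℂ) + v * I - ρ).re = ε := by
    rw [sub_re, hZ ρ hρ, re_vertical, add_sub_cancel_left]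
  have him : (((1 / 2 + ε : ℝ) : ℂ) + v * I - ρ).im = v - ρ.im := by simp
  rw [Function.comp_apply, coe_reAddGroupHom, one_div, inv_re, normSq_apply, hre, him, ← sq, ← sq]

lemma continuous_logDeriv_quadZeta₁_vertical (hχ : χ ≠ 1) {σ : ℝ}
    (hne : ∀ v : ℝ, quadZeta₁ χ (σ + v * I) ≠ 0) :
    Continuous fun v : ℝ ↦ logDeriv (quadZeta₁ χ) (σ + v * I) := by
  have hdiff := differentiable_quadZeta₁ hχ
  have hderiv : Continuous (deriv (quadZeta₁ χ)) :=
    (hdiff.contDiff (n := 1)).continuous_deriv le_rfl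
  exact (hderiv.comp (by fun_prop)).div (hdiff.continuous.comp (by fun_prop)) hne

theorem exists_integral_abs_re_logDeriv_quadZeta₁_le :
    ∃ C : ℝ, 0 < C ∧ ∀ (d : ℕ) [NeZero d] (χ : DirichletCharacter ℂ d), χ ≠ 1 → SatisfiesRH χ →
      ∀ ε : ℝ, 0 < ε → ε ≤ 3 / 2 → ∀ T : ℝ,
        ∫ v in (T - 1 / 2)..(T + 1 / 2),
          |(logDeriv (quadZeta₁ χ) ((1 / 2 + ε : ℝ) + v * I)).re| ≤ C * logConductor d T := by
  obtain ⟨C, hC, happrox⟩ := exists_zeros_logDeriv_quadZeta₁_approx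
  refine ⟨C + C * Real.pi, by positivity, fun d _ χ hχ hRH ε hε hε₂ T ↦ ?_⟩
  obtain ⟨Z, hcard, hZ, hlog⟩ := happrox d χ hχ hRH T
  have hcont : Continuous fun v : ℝ ↦ logDeriv (quadZeta₁ χ) ((1 / 2 + ε : ℝ) + v * I) :=
    continuous_logDeriv_quadZeta₁_vertical hχ fun v hzero ↦ by
      have := hRH _ (by rw [re_vertical]; positivity) hzero
      rw [re_vertical] at this
      linarith
  have hpoisson : IntervalIntegrable (poissonSum Z ε) volume (T - 1 / 2) (T + 1 / 2) :=
    (continuous_poissonSum hε Z).intervalIntegrable _ _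
  have hpointwise : ∀ v ∈ Icc (T - 1 / 2) (T + 1 / 2),
      |(logDeriv (quadZeta₁ χ) ((1 / 2 + ε : ℝ) + v * I)).re| ≤
        C * logConductor d T + poissonSum Z ε v := by
    intro v hv
    have him : |(((1 / 2 + ε : ℝ) : ℂ) + v * I).im - T| ≤ 1 / 2 := by
      rw [im_vertical, abs_le]
      constructor <;> linarith [hv.1, hv.2]
    have hre := (abs_re_le_norm _).trans (hlog _ (by simpa using hε)
      (by rw [re_vertical]; linarith) him)
    rw [sub_re, re_sum_one_div_sub v hZ] at hre
    have hnonneg := poissonSum_nonneg hε.le Z v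
    rw [abs_le] at hre ⊢
    constructor <;> linarith
  calc ∫ v in (T - 1 / 2)..(T + 1 / 2),
        |(logDeriv (quadZeta₁ χ) ((1 / 2 + ε : ℝ) + v * I)).re|
      ≤ ∫ v in (T - 1 / 2)..(T + 1 / 2), (C * logConductor d T + poissonSum Z ε v) :=
        intervalIntegral.integral_mono_on (by linarith)
          ((continuous_re.comp hcont).abs.intervalIntegrable _ _)
          (intervalIntegrable_const.add hpoisson) hpointwise
    _ ≤ C * logConductor d T + Z.card * Real.pi := by
        rw [intervalIntegral.integral_add intervalIntegrable_const hpoisson,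
          intervalIntegral.integral_const, show T + 1 / 2 - (T - 1 / 2) = 1 by ring, one_smul]
        gcongr
        exact integral_poissonSum_le hε _ _ Z
    _ ≤ C * logConductor d T + C * logConductor d T * Real.pi := by gcongr
    _ = (C + C * Real.pi) * logConductor d T := by ring

/-- The coefficients `Λ(n) (1 + re χ(n))`; for real `χ` they are those of the Dirichlet series of
the negated logarithmic derivative of `ζ(s) L(s, χ)`, and they are nonnegative. -/
noncomputable def quadVonMangoldt {d : ℕ} (χ : DirichletCharacter ℂ d) (n : ℕ) : ℝ :=
  vonMangoldt n * (1 + (χ n).re)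

omit [NeZero d] in
lemma quadVonMangoldt_nonneg (χ : DirichletCharacter ℂ d) (n : ℕ) : 0 ≤ quadVonMangoldt χ n := by
  have hre := (abs_le.mp ((abs_re_le_norm (χ n)).trans (χ.norm_le_one n))).1
  exact mul_nonneg vonMangoldt_nonneg (by linarith)

omit [NeZero d] in
lemma ofReal_quadVonMangoldt (hreal : ∀ a, (χ a).im = 0) :
    (fun n ↦ (quadVonMangoldt χ n : ℂ)) =
      (fun n ↦ (vonMangoldt n : ℂ)) + (fun n : ℕ ↦ χ n) * fun n ↦ (vonMangoldt n : ℂ) := by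
  funext n
  have hχn : χ n = (χ n).re := Complex.ext rfl (hreal n)
  simp only [Pi.add_apply, Pi.mul_apply, quadVonMangoldt, ofReal_mul, ofReal_add, ofReal_one,
    ← hχn]
  ring

omit [NeZero d] in
lemma LSeriesSummable_quadVonMangoldt (hreal : ∀ a, (χ a).im = 0) (hs : 1 < s.re) :
    LSeriesSummable (fun n ↦ (quadVonMangoldt χ n : ℂ)) s := by
  rw [ofReal_quadVonMangoldt hreal]
  exact (LSeriesSummable_vonMangoldt hs).add (LSeriesSummable_twist_vonMangoldt χ hs)

lemma logDeriv_LFunctionTrivChar₁_one (hs : 1 < s.re) :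
    logDeriv (LFunctionTrivChar₁ 1) s = 1 / (s - 1) + logDeriv riemannZeta s := by
  have hne : s ≠ 1 := by
    rintro rfl
    simp at hs
  have hev : LFunctionTrivChar₁ 1 =ᶠ[nhds s] fun z ↦ (z - 1) * riemannZeta z := by
    filter_upwards [isOpen_ne.mem_nhds hne] with z hz using LFunctionTrivChar₁_one_of_ne hz
  rw [(logDeriv_congr_nhds hev).eq_of_nhds, logDeriv_mul (f := fun z : ℂ ↦ z - 1) s
    (sub_ne_zero.mpr hne) (riemannZeta_ne_zero_of_one_le_re hs.le) (by fun_prop)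
    (differentiableAt_riemannZeta hne)]
  simp [logDeriv_apply]

lemma neg_logDeriv_quadZeta₁ (hχ : χ ≠ 1) (hreal : ∀ a, (χ a).im = 0) (hs : 1 < s.re) :
    -logDeriv (quadZeta₁ χ) s = LSeries (fun n ↦ (quadVonMangoldt χ n : ℂ)) s - 1 / (s - 1) := by
  obtain ⟨hζ, hL⟩ := mul_ne_zero_iff.mp (quadZeta₁_ne_zero_of_one_le_re hχ hs.le)
  have hmul : logDeriv (quadZeta₁ χ) s = 1 / (s - 1) + logDeriv riemannZeta s +
      logDeriv (LFunction χ) s := by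
    rw [← logDeriv_LFunctionTrivChar₁_one hs]
    exact logDeriv_mul s hζ hL (differentiable_LFunctionTrivChar₁ 1 s)
      (differentiable_LFunction hχ s)
  rw [ofReal_quadVonMangoldt hreal, LSeries_add (LSeriesSummable_vonMangoldt hs)
    (LSeriesSummable_twist_vonMangoldt χ hs), LSeries_vonMangoldt_eq_deriv_riemannZeta_div hs,
    LSeries_twist_vonMangoldt_eq χ hs, ← deriv_LFunction_eq_deriv_LSeries χ hs,
    ← LFunction_eq_LSeries χ hs, hmul, logDeriv_apply, logDeriv_apply]
  ring

end QuadraticZeta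

section MellinWeight

open Complex MeasureTheory Set Filter Asymptotics Topology DirichletCharacter

variable {K : ℂ → ℂ} {w : ℝ → ℝ} {a b c σ u : ℝ} {s : ℂ}

/-- Decay of order `(1 + (im s)²)⁻¹`, uniformly in the closed vertical strip `a ≤ re s ≤ b`. -/
def HasQuadraticDecayOn (K : ℂ → ℂ) (a b : ℝ) : Prop :=
  ∃ M : ℝ, ∀ s : ℂ, a ≤ s.re → s.re ≤ b → ‖K s‖ ≤ M * (1 + s.im ^ 2)⁻¹

lemma HasQuadraticDecayOn.integrable_vertical (h : HasQuadraticDecayOn K a b) (hK : Continuous K)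
    (ha : a ≤ c) (hb : c ≤ b) : Integrable fun t : ℝ ↦ K (c + t * I) := by
  obtain ⟨M, hM⟩ := h
  refine (integrable_inv_one_add_sq.const_mul M).mono'
    (hK.comp (by fun_prop)).aestronglyMeasurable (ae_of_all _ fun t ↦ ?_)
  simpa only [im_vertical] using
    hM (c + t * I) (ha.trans_eq (re_vertical c t).symm) ((re_vertical c t).trans_le hb)

/-- The Mellin transform of a real function. -/
noncomputable def realMellin (w : ℝ → ℝ) : ℂ → ℂ := mellin fun u ↦ (w u : ℂ)

lemma realMellin_conj (w : ℝ → ℝ) (s : ℂ) :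
    realMellin w ((starRingEnd ℂ) s) = (starRingEnd ℂ) (realMellin w s) := by
  rw [realMellin, mellin, mellin, ← integral_conj]
  refine setIntegral_congr_fun measurableSet_Ioi fun t ht ↦ ?_
  have harg : (t : ℂ).arg ≠ Real.pi := by
    rw [arg_ofReal_of_nonneg (le_of_lt ht)]
    exact Real.pi_pos.ne
  simp only [smul_eq_mul, map_mul, conj_ofReal]
  rw [← conj_ofReal t, ← cpow_conj _ _ harg, map_sub, map_one, conj_ofReal]

/-- The smooth cut-offs to which the explicit formula applies. Vanishing on `u ≤ 1` is what makes
the reflected half of the kernel `reflectedMellin` invisible to Dirichlet series. -/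
structure IsMellinWeight (w : ℝ → ℝ) : Prop where
  continuous : Continuous w
  eq_zero_of_le_one : ∀ u ≤ 1, w u = 0
  hasCompactSupport : HasCompactSupport w
  decay : ∀ a b : ℝ, 0 < a → HasQuadraticDecayOn (realMellin w) a b

namespace IsMellinWeight

lemma isBigO_atTop (hw : IsMellinWeight w) (r : ℝ) :
    (fun u ↦ (w u : ℂ)) =O[atTop] fun u : ℝ ↦ u ^ r := by
  have hzero : w =ᶠ[atTop] 0 := by
    have h := hasCompactSupport_iff_eventuallyEq.mp hw.hasCompactSupport
    rw [coclosedCompact_eq_cocompact, cocompact_eq_atBot_atTop] at h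
    exact h.filter_mono le_sup_right
  refine (isBigO_zero _ _).congr' (hzero.mono fun u hu ↦ ?_) EventuallyEq.rfl
  simp only [hu, Pi.zero_apply, ofReal_zero]

lemma isBigO_nhdsGT_zero (hw : IsMellinWeight w) (r : ℝ) :
    (fun u ↦ (w u : ℂ)) =O[𝓝[>] 0] fun u : ℝ ↦ u ^ r := by
  refine (isBigO_zero _ _).congr' ?_ EventuallyEq.rfl
  filter_upwards [nhdsWithin_le_nhds (Iio_mem_nhds one_pos)] with u hu
  rw [hw.eq_zero_of_le_one u hu.le, ofReal_zero]

lemma locallyIntegrableOn (hw : IsMellinWeight w) :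
    LocallyIntegrableOn (fun u ↦ (w u : ℂ)) (Ioi 0) :=
  (continuous_ofReal.comp hw.continuous).locallyIntegrable.locallyIntegrableOn _

lemma mellinConvergent (hw : IsMellinWeight w) (s : ℂ) :
    MellinConvergent (fun u ↦ (w u : ℂ)) s :=
  mellinConvergent_of_isBigO_rpow hw.locallyIntegrableOn (hw.isBigO_atTop _) (lt_add_one s.re)
    (hw.isBigO_nhdsGT_zero _) (sub_one_lt s.re)

lemma differentiable_realMellin (hw : IsMellinWeight w) : Differentiable ℂ (realMellin w) :=
  fun s ↦ mellin_differentiableAt_of_isBigO_rpow hw.locallyIntegrableOn (hw.isBigO_atTop _)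
    (lt_add_one s.re) (hw.isBigO_nhdsGT_zero _) (sub_one_lt s.re)

lemma integrable_realMellin (hw : IsMellinWeight w) (hc : 0 < c) :
    Integrable fun t : ℝ ↦ realMellin w (c + t * I) :=
  (hw.decay c c hc).integrable_vertical hw.differentiable_realMellin.continuous le_rfl le_rfl

lemma integral_cpow_mul_realMellin (hw : IsMellinWeight w) (hc : 0 < c) (hu : 0 < u) :
    ∫ t : ℝ, (u : ℂ) ^ (-((c : ℂ) + t * I)) * realMellin w (c + t * I) = 2 * Real.pi * w u := by
  have hinv := mellinInv_mellin_eq c (fun u ↦ (w u : ℂ)) hu (hw.mellinConvergent c)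
    (hw.integrable_realMellin hc) (continuous_ofReal.comp hw.continuous).continuousAt
  rw [mellinInv, real_smul] at hinv
  rw [← hinv]
  push_cast
  rw [← mul_assoc, mul_one_div_cancel (by simp [Real.pi_ne_zero]), one_mul]
  rfl

end IsMellinWeight

/-- The Mellin transform symmetrised by the reflection `s ↦ 2σ - s`, which on the line `re s = σ`
is complex conjugation, so that there it takes real values. -/
noncomputable def reflectedMellin (w : ℝ → ℝ) (σ : ℝ) (s : ℂ) : ℂ :=
  realMellin w s + realMellin w (2 * σ - s)

lemma reflectedMellin_vertical (w : ℝ → ℝ) (σ t : ℝ) :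
    reflectedMellin w σ (σ + t * I) = ((2 * (realMellin w (σ + t * I)).re : ℝ) : ℂ) := by
  have hconj : 2 * (σ : ℂ) - (σ + t * I) = (starRingEnd ℂ) (σ + t * I) := by
    rw [map_add, map_mul, conj_ofReal, conj_ofReal, conj_I]
    ring
  rw [reflectedMellin, hconj, realMellin_conj, add_conj]

namespace IsMellinWeight

lemma differentiable_reflectedMellin (hw : IsMellinWeight w) (σ : ℝ) :
    Differentiable ℂ (reflectedMellin w σ) :=
  hw.differentiable_realMellin.add (hw.differentiable_realMellin.comp (by fun_prop))

lemma hasQuadraticDecayOn_reflectedMellin (hw : IsMellinWeight w) (hc : c < 2 * σ) :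
    HasQuadraticDecayOn (reflectedMellin w σ) σ c := by
  obtain ⟨M, hM⟩ := hw.decay (2 * σ - c) c (sub_pos.mpr hc)
  refine ⟨2 * M, fun s hσ hs ↦ ?_⟩
  have hre : (2 * (σ : ℂ) - s).re = 2 * σ - s.re := by simp
  have him : (2 * (σ : ℂ) - s).im = -s.im := by simp
  have hrefl := hM (2 * σ - s) (by linarith) (by linarith)
  rw [him, neg_sq] at hrefl
  calc ‖reflectedMellin w σ s‖ ≤ ‖realMellin w s‖ + ‖realMellin w (2 * σ - s)‖ := norm_add_le _ _
    _ ≤ M * (1 + s.im ^ 2)⁻¹ + M * (1 + s.im ^ 2)⁻¹ :=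
        add_le_add (hM s (by linarith) hs) hrefl
    _ = 2 * M * (1 + s.im ^ 2)⁻¹ := by ring

lemma integrable_reflectedMellin (hw : IsMellinWeight w) (hσ : σ ≤ c) (hc : c < 2 * σ) :
    Integrable fun t : ℝ ↦ reflectedMellin w σ (c + t * I) :=
  (hw.hasQuadraticDecayOn_reflectedMellin hc).integrable_vertical
    (hw.differentiable_reflectedMellin σ).continuous hσ le_rfl

end IsMellinWeight

lemma integrable_cpow_neg_vertical_mul {K : ℝ → ℂ} (hu : 0 < u) (hK : Integrable K) :
    Integrable fun t : ℝ ↦ (u : ℂ) ^ (-((c : ℂ) + t * I)) * K t := by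
  refine hK.bdd_mul (c := u ^ (-c)) ?_ (ae_of_all _ fun t ↦ ?_)
  · exact (Continuous.const_cpow (by fun_prop)
      (Or.inl (ofReal_ne_zero.mpr hu.ne'))).aestronglyMeasurable
  · rw [norm_cpow_eq_rpow_re_of_pos hu, neg_re, re_vertical]

namespace IsMellinWeight

-- Substituting `t ↦ -t` turns this into Mellin inversion at `u⁻¹ ≤ 1`, where `w` vanishes.
lemma integral_cpow_mul_realMellin_reflected (hw : IsMellinWeight w) (hc : c < 2 * σ)
    (hu : 1 ≤ u) :
    ∫ t : ℝ, (u : ℂ) ^ (-((c : ℂ) + t * I)) * realMellin w (2 * σ - (c + t * I)) = 0 := by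
  have hu₀ : 0 < u := zero_lt_one.trans_le hu
  have harg : (u : ℂ).arg ≠ Real.pi := by
    rw [arg_ofReal_of_nonneg hu₀.le]
    exact Real.pi_pos.ne
  let g : ℝ → ℂ := fun t ↦ (u : ℂ) ^ (-(2 * σ : ℂ)) *
    (((u⁻¹ : ℝ) : ℂ) ^ (-(((2 * σ - c : ℝ) : ℂ) + t * I)) *
      realMellin w ((2 * σ - c : ℝ) + t * I))
  have hg (t : ℝ) : (u : ℂ) ^ (-((c : ℂ) + t * I)) * realMellin w (2 * σ - (c + t * I)) =
      g (-t) := by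
    simp only [g]
    rw [← mul_assoc, ofReal_inv, inv_cpow _ _ harg, ← cpow_neg,
      ← cpow_add _ _ (ofReal_ne_zero.mpr hu₀.ne')]
    congr 2 <;> push_cast <;> ring
  simp only [hg]
  rw [integral_neg_eq_self g, integral_const_mul,
    hw.integral_cpow_mul_realMellin (sub_pos.mpr hc) (inv_pos.mpr hu₀),
    hw.eq_zero_of_le_one _ (inv_le_one_of_one_le₀ hu), ofReal_zero, mul_zero, mul_zero]

lemma integral_cpow_mul_reflectedMellin (hw : IsMellinWeight w) (hσ : σ ≤ c) (hc : c < 2 * σ)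
    (hu : 1 ≤ u) :
    ∫ t : ℝ, (u : ℂ) ^ (-((c : ℂ) + t * I)) * reflectedMellin w σ (c + t * I) =
      2 * Real.pi * w u := by
  have hu₀ : 0 < u := zero_lt_one.trans_le hu
  have hc₀ : 0 < c := by linarith
  have hint := integrable_cpow_neg_vertical_mul (c := c) hu₀ (hw.integrable_realMellin hc₀)
  have hint' := integrable_cpow_neg_vertical_mul (c := c) hu₀ (hw.integrable_reflectedMellin hσ hc)
  rw [← hw.integral_cpow_mul_realMellin hc₀ hu₀, ← sub_eq_zero, ← integral_sub hint' hint,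
    ← hw.integral_cpow_mul_realMellin_reflected hc hu]
  congr with t
  rw [reflectedMellin]
  ring

end IsMellinWeight
end MellinWeight

section ExplicitFormula

open Complex MeasureTheory Set Filter Asymptotics Topology DirichletCharacter

variable {w : ℝ → ℝ} {a b c σ : ℝ}

lemma hasSum_integral_LSeries_mul {f : ℕ → ℂ} {K : ℝ → ℂ} (hf : LSeriesSummable f c)
    (hK : Integrable K) :
    HasSum (fun n ↦ ∫ t : ℝ, LSeries.term f (c + t * I) n * K t)
      (∫ t : ℝ, LSeries f (c + t * I) * K t) := by
  have hnorm (n : ℕ) (t : ℝ) : ‖LSeries.term f (c + t * I) n‖ = ‖LSeries.term f c n‖ := by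
    rw [LSeries.norm_term_eq, LSeries.norm_term_eq, re_vertical, ofReal_re]
  have hcont (n : ℕ) : Continuous fun t : ℝ ↦ LSeries.term f (c + t * I) n := by
    rcases eq_or_ne n 0 with rfl | hn
    · simpa only [LSeries.term_zero] using continuous_const
    · have hn' : (n : ℂ) ≠ 0 := Nat.cast_ne_zero.mpr hn
      simp only [LSeries.term_of_ne_zero hn]
      exact continuous_const.div (Continuous.const_cpow (by fun_prop) (Or.inl hn'))
        fun t ↦ by simp [cpow_eq_zero_iff, hn']
  simp only [LSeries, ← tsum_mul_right]
  refine hasSum_integral_of_summable_integral_norm (fun n ↦ ?_) ?_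
  · exact hK.bdd_mul (hcont n).aestronglyMeasurable (ae_of_all _ fun t ↦ (hnorm n t).le)
  · simp only [norm_mul, hnorm, integral_const_mul]
    exact hf.norm.mul_right _

lemma integrable_one_div_vertical_sub_one_mul {K : ℝ → ℂ} (hc : 1 < c) (hK : Integrable K) :
    Integrable fun t : ℝ ↦ 1 / ((c : ℂ) + t * I - 1) * K t := by
  have hle (t : ℝ) : c - 1 ≤ ‖(c : ℂ) + t * I - 1‖ := by
    simpa using re_le_norm ((c : ℂ) + t * I - 1)
  have hc' : 0 < c - 1 := sub_pos.mpr hc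
  refine hK.bdd_mul (c := 1 / (c - 1)) (Continuous.aestronglyMeasurable ?_)
    (ae_of_all _ fun t ↦ ?_)
  · exact continuous_const.div (by fun_prop) fun t ↦ norm_pos_iff.mp (hc'.trans_le (hle t))
  · rw [norm_div, norm_one]
    exact one_div_le_one_div_of_le hc' (hle t)

lemma integral_one_div_vertical_sub_one_mul {K : ℝ → ℂ} (hc : 1 < c) (hK : Integrable K) :
    ∫ t : ℝ, 1 / ((c : ℂ) + t * I - 1) * K t =
      ∫ u in Ioi (1 : ℝ), ∫ t : ℝ, (u : ℂ) ^ (-((c : ℂ) + t * I)) * K t := by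
  have hinner (t : ℝ) : 1 / ((c : ℂ) + t * I - 1) * K t =
      ∫ u in Ioi (1 : ℝ), (u : ℂ) ^ (-((c : ℂ) + t * I)) * K t := by
    rw [integral_mul_const, integral_Ioi_cpow_of_lt (by simpa using hc) zero_lt_one, ofReal_one,
      one_cpow, neg_div, ← div_neg, neg_add_rev, neg_neg, neg_add_eq_sub]
  simp only [hinner]
  refine integral_integral_swap ?_
  have hbound : Integrable (fun u : ℝ ↦ u ^ (-c)) (volume.restrict (Ioi 1)) :=
    integrableOn_Ioi_rpow_of_lt (by linarith) zero_lt_one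
  refine (hK.norm.mul_prod hbound).mono' ?_ ?_
  · have hpow : Measurable fun p : ℝ × ℝ ↦ (p.2 : ℂ) ^ (-((c : ℂ) + p.1 * I)) :=
      (measurable_ofReal.comp measurable_snd).pow (by fun_prop)
    exact hpow.aestronglyMeasurable.mul hK.aestronglyMeasurable.comp_fst
  · filter_upwards [Measure.quasiMeasurePreserving_snd.ae
      (ae_restrict_mem (μ := volume) (measurableSet_Ioi (a := (1 : ℝ))))] with p hp
    simp only [Function.uncurry, norm_mul]
    rw [norm_cpow_eq_rpow_re_of_pos (zero_lt_one.trans hp), neg_re, re_vertical, mul_comm]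

lemma tendsto_intervalIntegral_horizontal {G : ℂ → ℂ} {g : ℝ → ℝ} {l : Filter ℝ} (hab : a ≤ b)
    (hle : ∀ s : ℂ, a ≤ s.re → s.re ≤ b → ‖G s‖ ≤ g s.im) (hlim : Tendsto g l (𝓝 0)) :
    Tendsto (fun T : ℝ ↦ ∫ x in a..b, G (x + T * I)) l (𝓝 0) := by
  refine squeeze_zero_norm (fun T ↦ ?_) (by simpa using hlim.mul_const |b - a|)
  refine intervalIntegral.norm_integral_le_of_norm_le_const fun x hx ↦ ?_
  rw [uIoc_of_le hab] at hx
  simpa only [im_vertical] using hle (x + T * I) (by simpa using hx.1.le) (by simpa using hx.2)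

lemma integral_vertical_eq {G : ℂ → ℂ} {g : ℝ → ℝ} (hab : a ≤ b)
    (hG : ∀ s : ℂ, a ≤ s.re → s.re ≤ b → DifferentiableAt ℂ G s)
    (ha : Integrable fun t : ℝ ↦ G (a + t * I)) (hb : Integrable fun t : ℝ ↦ G (b + t * I))
    (hle : ∀ s : ℂ, a ≤ s.re → s.re ≤ b → ‖G s‖ ≤ g s.im) (hlim : Tendsto g (cocompact ℝ) (𝓝 0)) :
    ∫ t : ℝ, G (b + t * I) = ∫ t : ℝ, G (a + t * I) := by
  rw [cocompact_eq_atBot_atTop, tendsto_sup] at hlim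
  have hvertical {c : ℝ} (hint : Integrable fun t : ℝ ↦ G (c + t * I)) :=
    intervalIntegral_tendsto_integral hint tendsto_neg_atTop_atBot tendsto_id
  have htop := tendsto_intervalIntegral_horizontal hab hle hlim.2
  have hbot := (tendsto_intervalIntegral_horizontal hab hle hlim.1).comp tendsto_neg_atTop_atBot
  have hrect (T : ℝ) : I * (∫ t in -T..T, G (b + t * I)) - I * (∫ t in -T..T, G (a + t * I)) =
      (∫ x in a..b, G (x + T * I)) - ∫ x in a..b, G (x + (-T : ℝ) * I) := by
    have hcauchy := integral_boundary_rect_eq_zero_of_differentiableOn G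
      ((a : ℂ) + (-T : ℝ) * I) ((b : ℂ) + T * I) fun s hs ↦ by
        have hre := hs.1
        rw [mem_preimage, re_vertical, re_vertical, uIcc_of_le hab] at hre
        exact (hG s hre.1 hre.2).differentiableWithinAt
    simp only [re_vertical, im_vertical, smul_eq_mul] at hcauchy
    linear_combination hcauchy
  have hlim' := ((hvertical hb).const_mul I).sub ((hvertical ha).const_mul I)
  simp only [id, hrect] at hlim'
  have heq := tendsto_nhds_unique hlim' (htop.sub hbot)
  rw [sub_zero, sub_eq_zero] at heq
  exact mul_left_cancel₀ I_ne_zero heq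

end ExplicitFormula

section ExplicitFormula

open Complex MeasureTheory Set Filter Topology DirichletCharacter

variable {d : ℕ} [NeZero d] {χ : DirichletCharacter ℂ d} {w : ℝ → ℝ} {H : ℂ → ℂ} {a b c σ : ℝ}
  {s : ℂ}

lemma integrable_const_mul_one_add_sq_rpow (D : ℝ) :
    Integrable fun t : ℝ ↦ D * (1 + t ^ 2) ^ (-(3 / 4) : ℝ) := by
  refine Integrable.const_mul ?_ D
  have h := integrable_rpow_neg_one_add_norm_sq (E := ℝ) (μ := volume) (r := 3 / 2) (by norm_num)
  simp only [Real.norm_eq_abs, sq_abs] at h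
  convert h using 3
  norm_num

lemma tendsto_const_mul_one_add_sq_rpow (D : ℝ) :
    Tendsto (fun t : ℝ ↦ D * (1 + t ^ 2) ^ (-(3 / 4) : ℝ)) (cocompact ℝ) (𝓝 0) := by
  have hsq : Tendsto (fun t : ℝ ↦ 1 + t ^ 2) (cocompact ℝ) atTop := by
    simpa only [Function.comp_def, Real.norm_eq_abs, sq_abs] using tendsto_atTop_add_const_left _ 1
      ((tendsto_pow_atTop two_ne_zero).comp (tendsto_norm_cocompact_atTop (E := ℝ)))
  simpa using ((tendsto_rpow_neg_atTop (by norm_num)).comp hsq).const_mul D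

lemma logConductor_le_rpow (d : ℕ) [NeZero d] (t : ℝ) :
    logConductor d t ≤ 4 * d * (1 + t ^ 2) ^ (1 / 4 : ℝ) := by
  have hy : 0 < d * (|t| + 2) := zero_lt_two.trans_le (two_le_conductor d t)
  have habs : |t| + 2 ≤ 4 * √(1 + t ^ 2) := by
    linarith [Real.abs_le_sqrt (show t ^ 2 ≤ 1 + t ^ 2 by linarith),
      Real.one_le_sqrt.mpr (show 1 ≤ 1 + t ^ 2 by nlinarith)]
  have hle : d * (|t| + 2) ≤ (2 * d) ^ 2 * √(1 + t ^ 2) := by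
    calc d * (|t| + 2) ≤ d ^ 2 * (4 * √(1 + t ^ 2)) := by
          gcongr
          exact le_self_pow₀ (one_le_modulus d) two_ne_zero
      _ = (2 * d) ^ 2 * √(1 + t ^ 2) := by ring
  calc logConductor d t ≤ (d * (|t| + 2)) ^ (1 / 2 : ℝ) / (1 / 2) :=
        Real.log_le_rpow_div hy.le (by norm_num)
    _ = 2 * √(d * (|t| + 2)) := by rw [← Real.sqrt_eq_rpow]; ring
    _ ≤ 2 * √((2 * d) ^ 2 * √(1 + t ^ 2)) := by gcongr
    _ = 4 * d * (1 + t ^ 2) ^ (1 / 4 : ℝ) := by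
      rw [Real.sqrt_mul (by positivity), Real.sqrt_sq (by positivity), Real.sqrt_eq_rpow,
        Real.sqrt_eq_rpow, ← Real.rpow_mul (by positivity)]
      norm_num
      ring

lemma exists_norm_logDeriv_quadZeta₁_mul_le (hχ : χ ≠ 1) (hRH : SatisfiesRH χ) (ha : 1 / 2 < a)
    (hb : b ≤ 2) (hH : HasQuadraticDecayOn H a b) :
    ∃ D : ℝ, ∀ s : ℂ, a ≤ s.re → s.re ≤ b →
      ‖logDeriv (quadZeta₁ χ) s * H s‖ ≤ D * (1 + s.im ^ 2) ^ (-(3 / 4) : ℝ) := by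
  obtain ⟨C, hC, hlog⟩ := exists_norm_logDeriv_quadZeta₁_le
  obtain ⟨M, hM⟩ := hH
  refine ⟨C * (4 * d) * (1 + 1 / (a - 1 / 2)) * M, fun s has hsb ↦ ?_⟩
  have := sub_pos.mpr ha
  have hlogDeriv : ‖logDeriv (quadZeta₁ χ) s‖ ≤
      C * (4 * d * (1 + s.im ^ 2) ^ (1 / 4 : ℝ)) * (1 + 1 / (a - 1 / 2)) := by
    refine (hlog d χ hχ hRH s (by linarith) (hsb.trans hb)).trans ?_
    gcongr
    · have := logConductor_pos d s.im
      have : 0 < s.re - 1 / 2 := by linarith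
      positivity
    · exact logConductor_le_rpow d s.im
  have hpow : (1 + s.im ^ 2) ^ (1 / 4 : ℝ) * (1 + s.im ^ 2)⁻¹ =
      (1 + s.im ^ 2) ^ (-(3 / 4) : ℝ) := by
    rw [← Real.rpow_neg_one, ← Real.rpow_add (by positivity)]
    norm_num
  rw [norm_mul, ← hpow]
  refine (mul_le_mul hlogDeriv (hM s has hsb) (norm_nonneg _) (by positivity)).trans_eq ?_
  ring

lemma SatisfiesRH.quadZeta₁_ne_zero (hRH : SatisfiesRH χ) (hs : 1 / 2 < s.re) :
    quadZeta₁ χ s ≠ 0 :=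
  fun hzero ↦ hs.ne' (hRH s (by linarith) hzero)

lemma differentiableAt_logDeriv_quadZeta₁ (hχ : χ ≠ 1) (hRH : SatisfiesRH χ) (hs : 1 / 2 < s.re) :
    DifferentiableAt ℂ (logDeriv (quadZeta₁ χ)) s :=
  ((differentiable_quadZeta₁ hχ).deriv s).div (differentiable_quadZeta₁ hχ s)
    (hRH.quadZeta₁_ne_zero hs)

lemma integrable_logDeriv_quadZeta₁_mul (hχ : χ ≠ 1) (hRH : SatisfiesRH χ) (hH : Continuous H)
    (hdecay : HasQuadraticDecayOn H a b) (ha : 1 / 2 < a) (hac : a ≤ c) (hcb : c ≤ b)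
    (hb : b ≤ 2) : Integrable fun t : ℝ ↦ logDeriv (quadZeta₁ χ) (c + t * I) * H (c + t * I) := by
  obtain ⟨D, hD⟩ := exists_norm_logDeriv_quadZeta₁_mul_le hχ hRH ha hb hdecay
  have hcont := continuous_logDeriv_quadZeta₁_vertical hχ (σ := c) fun v ↦
    hRH.quadZeta₁_ne_zero (by rw [re_vertical]; linarith)
  refine (integrable_const_mul_one_add_sq_rpow D).mono'
    (hcont.mul (hH.comp (by fun_prop))).aestronglyMeasurable (ae_of_all _ fun t ↦ ?_)
  simpa only [im_vertical] using
    hD (c + t * I) (hac.trans_eq (re_vertical c t).symm) ((re_vertical c t).trans_le hcb)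

namespace IsMellinWeight

lemma integral_one_div_mul_reflectedMellin (hw : IsMellinWeight w) (hσ : σ ≤ c) (hc : 1 < c)
    (hcσ : c < 2 * σ) :
    ∫ t : ℝ, 1 / ((c : ℂ) + t * I - 1) * reflectedMellin w σ (c + t * I) =
      2 * Real.pi * (∫ u in Ioi (1 : ℝ), w u : ℝ) := by
  rw [integral_one_div_vertical_sub_one_mul hc (hw.integrable_reflectedMellin hσ hcσ),
    ← integral_complex_ofReal, ← integral_const_mul]
  exact setIntegral_congr_fun measurableSet_Ioi fun u hu ↦
    hw.integral_cpow_mul_reflectedMellin hσ hcσ (le_of_lt hu)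

lemma integral_LSeries_mul_reflectedMellin (hw : IsMellinWeight w) (hσ : σ ≤ c)
    (hcσ : c < 2 * σ) {f : ℕ → ℝ} (hf : LSeriesSummable (fun n ↦ (f n : ℂ)) c) :
    ∫ t : ℝ, LSeries (fun n ↦ (f n : ℂ)) (c + t * I) * reflectedMellin w σ (c + t * I) =
      2 * Real.pi * (∑' n : ℕ, f n * w n : ℝ) := by
  rw [← (hasSum_integral_LSeries_mul hf (hw.integrable_reflectedMellin hσ hcσ)).tsum_eq,
    ofReal_tsum, ← tsum_mul_left]
  congr with n
  rcases eq_or_ne n 0 with rfl | hn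
  · simp [hw.eq_zero_of_le_one 0 zero_le_one]
  · have hn₁ : (1 : ℝ) ≤ n := Nat.one_le_cast.mpr (Nat.one_le_iff_ne_zero.mpr hn)
    have hinv := hw.integral_cpow_mul_reflectedMellin hσ hcσ hn₁
    simp only [LSeries.term_of_ne_zero hn, div_eq_mul_inv, ← cpow_neg, mul_assoc,
      integral_const_mul]
    rw [ofReal_natCast] at hinv
    rw [hinv]
    push_cast
    ring

lemma integral_logDeriv_mul_reflectedMellin (hw : IsMellinWeight w) (hχ : χ ≠ 1)
    (hreal : ∀ a : ZMod d, (χ a).im = 0) (hRH : SatisfiesRH χ) (hσ : 1 / 2 < σ) (hσc : σ ≤ c)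
    (hc : 1 < c) (hcσ : c < 2 * σ) (hc₂ : c ≤ 2) :
    ∫ t : ℝ, logDeriv (quadZeta₁ χ) (c + t * I) * reflectedMellin w σ (c + t * I) =
      (2 * Real.pi * ((∫ u in Ioi (1 : ℝ), w u) - ∑' n : ℕ, quadVonMangoldt χ n * w n) : ℝ) := by
  have hK := hw.integrable_reflectedMellin hσc hcσ
  have hpole := integrable_one_div_vertical_sub_one_mul hc hK
  have hlogDeriv := integrable_logDeriv_quadZeta₁_mul hχ hRH
    (hw.differentiable_reflectedMellin σ).continuous
    (hw.hasQuadraticDecayOn_reflectedMellin hcσ) hσ hσc le_rfl hc₂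
  have hsum := hw.integral_LSeries_mul_reflectedMellin hσc hcσ
    (LSeriesSummable_quadVonMangoldt (χ := χ) hreal (s := c) hc)
  have hseries (t : ℝ) : LSeries (fun n ↦ (quadVonMangoldt χ n : ℂ)) (c + t * I) *
      reflectedMellin w σ (c + t * I) =
      1 / ((c : ℂ) + t * I - 1) * reflectedMellin w σ (c + t * I) -
        logDeriv (quadZeta₁ χ) (c + t * I) * reflectedMellin w σ (c + t * I) := by
    have h := neg_logDeriv_quadZeta₁ hχ hreal (s := c + t * I) (by rwa [re_vertical])
    linear_combination -reflectedMellin w σ (c + t * I) * h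
  simp only [hseries] at hsum
  rw [integral_sub hpole hlogDeriv, hw.integral_one_div_mul_reflectedMellin hσc hc hcσ] at hsum
  push_cast at hsum ⊢
  linear_combination -hsum

theorem integral_re_logDeriv_mul_re_realMellin (hw : IsMellinWeight w) (hχ : χ ≠ 1)
    (hreal : ∀ a : ZMod d, (χ a).im = 0) (hRH : SatisfiesRH χ) (hσ : 1 / 2 < σ)
    (hσ₂ : σ ≤ 3 / 2) :
    ∫ t : ℝ, (logDeriv (quadZeta₁ χ) (σ + t * I)).re * (realMellin w (σ + t * I)).re =
      Real.pi * ((∫ u in Ioi (1 : ℝ), w u) - ∑' n : ℕ, quadVonMangoldt χ n * w n) := by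
  obtain ⟨c, hc, hσc, hcσ, hc₂⟩ : ∃ c : ℝ, 1 < c ∧ σ ≤ c ∧ c < 2 * σ ∧ c ≤ 2 :=
    ⟨σ + 1 / 2, by linarith, by linarith, by linarith, by linarith⟩
  have hcont := (hw.differentiable_reflectedMellin σ).continuous
  have hdecay := hw.hasQuadraticDecayOn_reflectedMellin hcσ
  obtain ⟨D, hD⟩ := exists_norm_logDeriv_quadZeta₁_mul_le hχ hRH hσ hc₂ hdecay
  have hleft := integrable_logDeriv_quadZeta₁_mul hχ hRH hcont hdecay hσ le_rfl hσc hc₂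
  have hshift := integral_vertical_eq
    (G := fun s ↦ logDeriv (quadZeta₁ χ) s * reflectedMellin w σ s) hσc
    (fun s hs _ ↦ (differentiableAt_logDeriv_quadZeta₁ hχ hRH (hσ.trans_le hs)).mul
      (hw.differentiable_reflectedMellin σ s))
    hleft (integrable_logDeriv_quadZeta₁_mul hχ hRH hcont hdecay hσ hσc le_rfl hc₂)
    hD (tendsto_const_mul_one_add_sq_rpow D)
  rw [hw.integral_logDeriv_mul_reflectedMellin hχ hreal hRH hσ hσc hc hcσ hc₂] at hshift
  have hre := integral_re hleft
  simp only [RCLike.re_eq_complex_re] at hre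
  rw [← hshift, ofReal_re] at hre
  simp only [reflectedMellin_vertical, re_mul_ofReal, mul_left_comm _ (2 : ℝ),
    integral_const_mul] at hre
  linarith

theorem abs_tsum_sub_integral_le (hw : IsMellinWeight w) (hχ : χ ≠ 1)
    (hreal : ∀ a : ZMod d, (χ a).im = 0) (hRH : SatisfiesRH χ) (hσ : 1 / 2 < σ)
    (hσ₂ : σ ≤ 3 / 2) :
    |∑' n : ℕ, quadVonMangoldt χ n * w n - ∫ u in Ioi (1 : ℝ), w u| ≤
      ∫ t : ℝ, |(logDeriv (quadZeta₁ χ) (σ + t * I)).re| * ‖realMellin w (σ + t * I)‖ := by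
  have hdom : Integrable fun t : ℝ ↦
      |(logDeriv (quadZeta₁ χ) (σ + t * I)).re| * ‖realMellin w (σ + t * I)‖ := by
    have h := (integrable_logDeriv_quadZeta₁_mul hχ hRH hw.differentiable_realMellin.continuous
      (hw.decay σ σ (by linarith)) hσ le_rfl le_rfl (by linarith)).norm
    have hcont := continuous_logDeriv_quadZeta₁_vertical hχ (σ := σ) fun v ↦
      hRH.quadZeta₁_ne_zero (by rwa [re_vertical])
    have hcont' := hw.differentiable_realMellin.continuous
    refine h.mono' (Continuous.aestronglyMeasurable (by fun_prop)) (ae_of_all _ fun t ↦ ?_)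
    rw [norm_mul, norm_mul, Real.norm_eq_abs, abs_abs, norm_norm]
    gcongr
    exact abs_re_le_norm _
  have hbound : ‖∫ t : ℝ, (logDeriv (quadZeta₁ χ) (σ + t * I)).re *
      (realMellin w (σ + t * I)).re‖ ≤
      ∫ t : ℝ, |(logDeriv (quadZeta₁ χ) (σ + t * I)).re| * ‖realMellin w (σ + t * I)‖ := by
    refine norm_integral_le_of_norm_le hdom (ae_of_all _ fun t ↦ ?_)
    rw [norm_mul, Real.norm_eq_abs, Real.norm_eq_abs]
    gcongr
    exact abs_re_le_norm _
  rw [hw.integral_re_logDeriv_mul_re_realMellin hχ hreal hRH hσ hσ₂,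
    Real.norm_eq_abs, abs_mul, abs_of_pos Real.pi_pos, abs_sub_comm] at hbound
  nlinarith [Real.pi_gt_three, abs_nonneg (∑' n : ℕ, quadVonMangoldt χ n * w n -
    ∫ u in Ioi (1 : ℝ), w u)]

end IsMellinWeight
end ExplicitFormula

section Trapezoid

open Complex MeasureTheory Set Filter Topology

variable {a h u x A B : ℝ} {s : ℂ}

lemma hasMellin_max_sub (ha : 0 < a) (hs : 0 < s.re) :
    HasMellin (fun u ↦ ((max 0 (a - u) : ℝ) : ℂ)) s ((a : ℂ) ^ (s + 1) / (s * (s + 1))) := by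
  have hs₀ : s ≠ 0 := fun h ↦ hs.ne' (by rw [h, zero_re])
  have hs₁ : s + 1 ≠ 0 := fun h ↦ by
    have hre := congrArg re h
    rw [add_re, one_re, zero_re] at hre
    linarith
  have haC : (a : ℂ) ≠ 0 := ofReal_ne_zero.mpr ha.ne'
  have hint₀ : IntervalIntegrable (fun u : ℝ ↦ (a : ℂ) * (u : ℂ) ^ (s - 1)) volume 0 a :=
    (intervalIntegral.intervalIntegrable_cpow' (by simpa using hs)).const_mul _
  have hint₁ : IntervalIntegrable (fun u : ℝ ↦ (u : ℂ) ^ s) volume 0 a :=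
    intervalIntegral.intervalIntegrable_cpow' (by linarith)
  have hint := (intervalIntegrable_iff_integrableOn_Ioc_of_le ha.le).mp (hint₀.sub hint₁)
  have heq : EqOn (fun u : ℝ ↦ (u : ℂ) ^ (s - 1) • ((max 0 (a - u) : ℝ) : ℂ))
      ((Ioc 0 a).indicator fun u : ℝ ↦ (a : ℂ) * (u : ℂ) ^ (s - 1) - (u : ℂ) ^ s) (Ioi 0) := by
    intro u hu
    have huC : (u : ℂ) ≠ 0 := ofReal_ne_zero.mpr (ne_of_gt hu)
    rcases le_or_gt u a with hua | hua
    · rw [indicator_of_mem (show u ∈ Ioc 0 a from ⟨hu, hua⟩)]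
      simp only [max_eq_right (sub_nonneg.mpr hua), smul_eq_mul, cpow_sub _ _ huC, cpow_one]
      push_cast
      field_simp
    · rw [indicator_of_notMem fun h : u ∈ Ioc 0 a ↦ hua.not_ge h.2]
      simp only [max_eq_left (sub_nonpos.mpr hua.le), ofReal_zero, smul_zero]
  refine ⟨((hint.integrable_indicator measurableSet_Ioc).integrableOn).congr_fun heq.symm
    measurableSet_Ioi, ?_⟩
  rw [mellin, setIntegral_congr_fun measurableSet_Ioi heq, setIntegral_indicator measurableSet_Ioc,
    inter_eq_right.mpr Ioc_subset_Ioi_self, ← intervalIntegral.integral_of_le ha.le,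
    intervalIntegral.integral_sub hint₀ hint₁, intervalIntegral.integral_const_mul,
    integral_cpow (Or.inl (by simpa using hs)), integral_cpow (Or.inl (by linarith)), ofReal_zero,
    sub_add_cancel, zero_cpow hs₀, zero_cpow hs₁, cpow_add _ _ haC, cpow_one]
  field_simp
  ring

/-- The continuous piecewise linear function equal to `1` on `u ≤ a`, to `0` on `a + h ≤ u`, and
affine in between. -/
noncomputable def ramp (a h u : ℝ) : ℝ := (max 0 (a + h - u) - max 0 (a - u)) / h

lemma continuous_ramp (a h : ℝ) : Continuous (ramp a h) := by
  unfold ramp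
  fun_prop

lemma ramp_eq_one (hh : 0 < h) (hu : u ≤ a) : ramp a h u = 1 := by
  rw [ramp, max_eq_right (by linarith), max_eq_right (by linarith)]
  field_simp
  ring

lemma ramp_eq_zero (hh : 0 ≤ h) (hu : a + h ≤ u) : ramp a h u = 0 := by
  rw [ramp, max_eq_left (by linarith), max_eq_left (by linarith), sub_self, zero_div]

lemma ramp_nonneg (hh : 0 ≤ h) : 0 ≤ ramp a h u :=
  div_nonneg (sub_nonneg.mpr (max_le_max le_rfl (by linarith))) hh

lemma ramp_le_one (hh : 0 < h) : ramp a h u ≤ 1 := by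
  rw [ramp, div_le_one hh, sub_le_iff_le_add]
  exact max_le (by positivity) (by linarith [le_max_right 0 (a - u)])

lemma hasMellin_ramp (ha : 0 < a) (hh : 0 < h) (hs : 0 < s.re) :
    HasMellin (fun u ↦ (ramp a h u : ℂ)) s
      ((((a + h : ℝ) : ℂ) ^ (s + 1) - (a : ℂ) ^ (s + 1)) / (s * (s + 1)) / h) := by
  obtain ⟨hconv, hval⟩ := hasMellin_max_sub (add_pos ha hh) hs
  obtain ⟨hconv', hval'⟩ := hasMellin_max_sub ha hs
  obtain ⟨hconv_sub, hval_sub⟩ := hasMellin_sub hconv hconv'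
  rw [hval, hval', ← sub_div] at hval_sub
  simp only [ramp, ofReal_div, ofReal_sub]
  exact ⟨hconv_sub.div_const _, by rw [mellin_div_const, hval_sub]⟩

lemma norm_cpow_sub_cpow_div_le (ha : 0 < a) (hh : 0 ≤ h) (hs : 0 ≤ s.re) :
    ‖(((a + h : ℝ) : ℂ) ^ (s + 1) - (a : ℂ) ^ (s + 1)) / (s + 1)‖ ≤ (a + h) ^ s.re * h := by
  rw [← integral_cpow (Or.inl (by linarith))]
  refine (intervalIntegral.norm_integral_le_of_norm_le_const
    (C := (a + h) ^ s.re) fun u hu ↦ ?_).trans_eq ?_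
  · rw [uIoc_of_le (by linarith)] at hu
    have hu₀ : 0 < u := ha.trans hu.1
    rw [norm_cpow_eq_rpow_re_of_pos hu₀]
    exact Real.rpow_le_rpow hu₀.le hu.2 hs
  · rw [add_sub_cancel_left, abs_of_nonneg hh]

lemma norm_realMellin_ramp_le (ha : 0 < a) (hh : 0 < h) (hs : 0 < s.re) :
    ‖realMellin (ramp a h) s‖ ≤ (a + h) ^ s.re / ‖s‖ := by
  rw [realMellin, (hasMellin_ramp ha hh hs).2, mul_comm s, ← div_div, norm_div, norm_div _ s,
    norm_real, Real.norm_of_nonneg hh.le, div_right_comm]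
  gcongr
  exact (div_le_iff₀ hh).mpr (norm_cpow_sub_cpow_div_le ha hh.le hs.le)

lemma norm_realMellin_ramp_le_quadratic (ha : 0 < a) (hh : 0 < h) (hs : 0 < s.re) :
    ‖realMellin (ramp a h) s‖ ≤ 2 * (a + h) ^ (s.re + 1) / h / (‖s‖ * ‖s + 1‖) := by
  have hcpow {b : ℝ} (hb : 0 < b) : ‖(b : ℂ) ^ (s + 1)‖ = b ^ (s.re + 1) := by
    rw [norm_cpow_eq_rpow_re_of_pos hb, add_re, one_re]
  rw [realMellin, (hasMellin_ramp ha hh hs).2, norm_div, norm_div _ (s * (s + 1)), norm_mul,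
    norm_real, Real.norm_of_nonneg hh.le, div_right_comm]
  gcongr
  calc ‖((a + h : ℝ) : ℂ) ^ (s + 1) - (a : ℂ) ^ (s + 1)‖
      ≤ (a + h) ^ (s.re + 1) + a ^ (s.re + 1) := by
        rw [← hcpow ha, ← hcpow (add_pos ha hh)]
        exact norm_sub_le _ _
    _ ≤ (a + h) ^ (s.re + 1) + (a + h) ^ (s.re + 1) := by
        gcongr
        linarith
    _ = 2 * (a + h) ^ (s.re + 1) := by ring

lemma sq_add_im_sq_le_norm_mul_norm_add_one (hA : 0 ≤ A) (hs : A ≤ s.re) :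
    A ^ 2 + s.im ^ 2 ≤ ‖s‖ * ‖s + 1‖ := by
  have hnorm : ‖s‖ ≤ ‖s + 1‖ := by
    rw [norm_def, norm_def]
    refine Real.sqrt_le_sqrt ?_
    simp only [normSq_apply, add_re, one_re, add_im, one_im, add_zero]
    nlinarith
  calc A ^ 2 + s.im ^ 2 ≤ s.re ^ 2 + s.im ^ 2 := by gcongr
    _ = ‖s‖ * ‖s‖ := by rw [norm_mul_self_eq_normSq, normSq_apply, sq, sq]
    _ ≤ ‖s‖ * ‖s + 1‖ := by gcongr

lemma hasQuadraticDecayOn_realMellin_ramp (ha : 1 ≤ a) (hh : 0 < h) (hA : 0 < A) :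
    HasQuadraticDecayOn (realMellin (ramp a h)) A B := by
  have ha₀ : 0 < a := zero_lt_one.trans_le ha
  refine ⟨2 * (a + h) ^ (B + 1) / h * (1 + 1 / A ^ 2), fun s hsA hsB ↦ ?_⟩
  have hinv : (A ^ 2 + s.im ^ 2)⁻¹ ≤ (1 + 1 / A ^ 2) * (1 + s.im ^ 2)⁻¹ := by
    rw [← div_eq_mul_inv, le_div_iff₀ (by positivity), inv_mul_le_iff₀ (by positivity)]
    have hexpand : (A ^ 2 + s.im ^ 2) * (1 + 1 / A ^ 2) =
        1 + s.im ^ 2 + (A ^ 2 + s.im ^ 2 / A ^ 2) := by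
      field_simp
      ring
    rw [hexpand]
    exact le_add_of_nonneg_right (by positivity)
  calc ‖realMellin (ramp a h) s‖
      ≤ 2 * (a + h) ^ (s.re + 1) / h / (‖s‖ * ‖s + 1‖) :=
        norm_realMellin_ramp_le_quadratic ha₀ hh (hA.trans_le hsA)
    _ ≤ 2 * (a + h) ^ (B + 1) / h / (A ^ 2 + s.im ^ 2) := by
        gcongr
        · linarith
        · exact sq_add_im_sq_le_norm_mul_norm_add_one hA.le hsA
    _ ≤ 2 * (a + h) ^ (B + 1) / h * ((1 + 1 / A ^ 2) * (1 + s.im ^ 2)⁻¹) := by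
        rw [div_eq_mul_inv _ (A ^ 2 + s.im ^ 2)]
        gcongr
    _ = 2 * (a + h) ^ (B + 1) / h * (1 + 1 / A ^ 2) * (1 + s.im ^ 2)⁻¹ := by ring

/-- The smoothed indicator function of `[2, x]`: it is supported in `[1, x + √x]`. -/
noncomputable def trapezoid (x u : ℝ) : ℝ := ramp x (√x) u - ramp 1 1 u

lemma continuous_trapezoid (x : ℝ) : Continuous (trapezoid x) :=
  (continuous_ramp x (√x)).sub (continuous_ramp 1 1)

lemma trapezoid_of_le (hx : 0 < x) (hu : u ≤ x) : trapezoid x u = 1 - ramp 1 1 u := by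
  rw [trapezoid, ramp_eq_one (Real.sqrt_pos.mpr hx) hu]

lemma trapezoid_of_two_le (hu : 2 ≤ u) : trapezoid x u = ramp x (√x) u := by
  rw [trapezoid, ramp_eq_zero zero_le_one (by linarith), sub_zero]

lemma trapezoid_eq_zero_of_le_one (hx : 1 ≤ x) (hu : u ≤ 1) : trapezoid x u = 0 := by
  rw [trapezoid_of_le (by linarith) (hu.trans hx), ramp_eq_one one_pos hu, sub_self]

lemma trapezoid_eq_one (hx : 0 < x) (hu : 2 ≤ u) (hux : u ≤ x) : trapezoid x u = 1 := by
  rw [trapezoid_of_two_le hu, ramp_eq_one (Real.sqrt_pos.mpr hx) hux]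

lemma trapezoid_eq_zero_of_add_sqrt_le (hx : 1 ≤ x) (hu : x + √x ≤ u) : trapezoid x u = 0 := by
  have := Real.one_le_sqrt.mpr hx
  rw [trapezoid_of_two_le (by linarith), ramp_eq_zero (Real.sqrt_nonneg x) hu]

lemma trapezoid_mem_Icc (hx : 2 ≤ x) (u : ℝ) : trapezoid x u ∈ Icc 0 1 := by
  rcases le_total u 2 with hu | hu
  · rw [trapezoid_of_le (by linarith) (hu.trans hx)]
    exact ⟨sub_nonneg.mpr (ramp_le_one one_pos), sub_le_self _ (ramp_nonneg zero_le_one)⟩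
  · rw [trapezoid_of_two_le hu]
    exact ⟨ramp_nonneg (Real.sqrt_nonneg x), ramp_le_one (Real.sqrt_pos.mpr (by linarith))⟩

lemma hasMellin_trapezoid (hx : 0 < x) (hs : 0 < s.re) :
    HasMellin (fun u ↦ (trapezoid x u : ℂ)) s
      (realMellin (ramp x (√x)) s - realMellin (ramp 1 1) s) := by
  simp only [trapezoid, ofReal_sub]
  exact hasMellin_sub (hasMellin_ramp hx (Real.sqrt_pos.mpr hx) hs).1
    (hasMellin_ramp one_pos one_pos hs).1

lemma norm_realMellin_trapezoid_le_add (hx : 0 < x) (hs : 0 < s.re) :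
    ‖realMellin (trapezoid x) s‖ ≤ ‖realMellin (ramp x (√x)) s‖ + ‖realMellin (ramp 1 1) s‖ := by
  rw [realMellin, (hasMellin_trapezoid hx hs).2]
  exact norm_sub_le _ _

lemma isMellinWeight_trapezoid (hx : 1 ≤ x) : IsMellinWeight (trapezoid x) where
  continuous := continuous_trapezoid x
  eq_zero_of_le_one _ := trapezoid_eq_zero_of_le_one hx
  hasCompactSupport := by
    refine HasCompactSupport.of_support_subset_isCompact (isCompact_Icc (a := 1) (b := x + √x))
      fun u hu ↦ ⟨?_, ?_⟩ <;> by_contra! h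
    · exact hu (trapezoid_eq_zero_of_le_one hx h.le)
    · exact hu (trapezoid_eq_zero_of_add_sqrt_le hx h.le)
  decay A B hA := by
    have hx₀ : 0 < x := zero_lt_one.trans_le hx
    obtain ⟨M, hM⟩ := hasQuadraticDecayOn_realMellin_ramp (B := B) hx (Real.sqrt_pos.mpr hx₀) hA
    obtain ⟨M', hM'⟩ := hasQuadraticDecayOn_realMellin_ramp (B := B) le_rfl one_pos hA
    refine ⟨M + M', fun s hsA hsB ↦ ?_⟩
    rw [add_mul]
    exact (norm_realMellin_trapezoid_le_add hx₀ (hA.trans_le hsA)).trans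
      (add_le_add (hM s hsA hsB) (hM' s hsA hsB))

lemma integral_trapezoid_eq (hx : 1 ≤ x) :
    ∫ u in Ioi (1 : ℝ), trapezoid x u = ∫ u in Ioc 1 (x + √x), trapezoid x u :=
  setIntegral_eq_of_subset_of_forall_sdiff_eq_zero measurableSet_Ioi Ioc_subset_Ioi_self
    fun _ hu ↦ trapezoid_eq_zero_of_add_sqrt_le hx
      (le_of_not_ge fun hle ↦ hu.2 ⟨hu.1, hle⟩)

lemma integral_trapezoid_mem_Icc (hx : 2 ≤ x) :
    ∫ u in Ioi (1 : ℝ), trapezoid x u ∈ Icc (x - 2) (x + √x - 1) := by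
  have hsqrt := Real.sqrt_nonneg x
  have hint : IntegrableOn (trapezoid x) (Ioc 1 (x + √x)) :=
    (continuous_trapezoid x).integrableOn_Ioc
  rw [integral_trapezoid_eq (by linarith)]
  constructor
  · calc x - 2 = ∫ _ in Ioc 2 x, (1 : ℝ) := by simp [hx]
      _ = ∫ u in Ioc 2 x, trapezoid x u := setIntegral_congr_fun measurableSet_Ioc
          fun u hu ↦ (trapezoid_eq_one (by linarith) hu.1.le hu.2).symm
      _ ≤ ∫ u in Ioc 1 (x + √x), trapezoid x u := setIntegral_mono_set hint
          (ae_of_all _ fun u ↦ (trapezoid_mem_Icc hx u).1)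
          (Ioc_subset_Ioc one_le_two (by linarith)).eventuallyLE
  · calc ∫ u in Ioc 1 (x + √x), trapezoid x u ≤ ∫ _ in Ioc 1 (x + √x), (1 : ℝ) :=
          setIntegral_mono_on hint (by simp) measurableSet_Ioc fun u _ ↦ (trapezoid_mem_Icc hx u).2
      _ = x + √x - 1 := by simp [show 1 ≤ x + √x by linarith]

/-- The abscissa of the line of integration. Its distance to the critical line is of order
`1 / log x`, the largest order for which `x ^ s` is still `O(√x)`. -/
noncomputable def nearCriticalAbscissa (x : ℝ) : ℝ := 1 / 2 + 1 / (2 * Real.log x)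

lemma one_div_two_mul_log_pos (hx : 1 < x) : 0 < 1 / (2 * Real.log x) := by
  have := Real.log_pos hx
  positivity

lemma one_half_lt_nearCriticalAbscissa (hx : 1 < x) : 1 / 2 < nearCriticalAbscissa x :=
  lt_add_of_pos_right _ (one_div_two_mul_log_pos hx)

lemma nearCriticalAbscissa_le (hx : 2 ≤ x) : nearCriticalAbscissa x ≤ 3 / 2 := by
  have hlog : 1 ≤ 2 * Real.log x := by
    linarith [Real.log_two_gt_d9, Real.log_le_log two_pos hx]
  linarith [div_le_one_of_le₀ hlog (by linarith), nearCriticalAbscissa.eq_1 x]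

lemma rpow_nearCriticalAbscissa_le (hx : 1 < x) : x ^ nearCriticalAbscissa x ≤ 2 * √x := by
  have hx₀ : 0 < x := by linarith
  have hlog : Real.log x ≠ 0 := (Real.log_pos hx).ne'
  have hexp : x ^ (1 / (2 * Real.log x)) = Real.exp (1 / 2) := by
    rw [Real.rpow_def_of_pos hx₀]
    congr 1
    field_simp
  have hexp_le : Real.exp (1 / 2) ≤ 2 := by
    have hsq : Real.exp (1 / 2) ^ 2 = Real.exp 1 := by
      rw [← Real.exp_nat_mul]
      norm_num
    nlinarith [Real.exp_one_lt_d9, Real.exp_pos (1 / 2)]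
  rw [nearCriticalAbscissa, Real.rpow_add hx₀, ← Real.sqrt_eq_rpow, hexp, mul_comm]
  gcongr

lemma two_rpow_nearCriticalAbscissa_le (hx : 2 ≤ x) : (2 : ℝ) ^ nearCriticalAbscissa x ≤ 4 := by
  calc (2 : ℝ) ^ nearCriticalAbscissa x ≤ (2 : ℝ) ^ (2 : ℝ) :=
        Real.rpow_le_rpow_of_exponent_le one_le_two (by linarith [nearCriticalAbscissa_le hx])
    _ = 4 := by norm_num

lemma sqrt_le_self_of_one_le (hx : 1 ≤ x) : √x ≤ x :=
  Real.sqrt_le_self_iff.mpr (Or.inr hx)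

lemma add_sqrt_rpow_nearCriticalAbscissa_le (hx : 2 ≤ x) :
    (x + √x) ^ nearCriticalAbscissa x ≤ 8 * √x := by
  have hσ : 0 ≤ nearCriticalAbscissa x :=
    one_half_pos.le.trans (one_half_lt_nearCriticalAbscissa (by linarith)).le
  calc (x + √x) ^ nearCriticalAbscissa x ≤ (2 * x) ^ nearCriticalAbscissa x := by
        gcongr
        linarith [sqrt_le_self_of_one_le (x := x) (by linarith)]
    _ = 2 ^ nearCriticalAbscissa x * x ^ nearCriticalAbscissa x :=
        Real.mul_rpow zero_le_two (by linarith)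
    _ ≤ 4 * (2 * √x) := by
        gcongr
        · exact two_rpow_nearCriticalAbscissa_le hx
        · exact rpow_nearCriticalAbscissa_le (by linarith)
    _ = 8 * √x := by ring

lemma norm_realMellin_trapezoid_le_linear (hx : 2 ≤ x) (hs : s.re = nearCriticalAbscissa x) :
    ‖realMellin (trapezoid x) s‖ ≤ 12 * √x / ‖s‖ := by
  have hx₀ : 0 < x := by linarith
  have hre : 0 < s.re := by
    rw [hs]
    exact one_half_pos.trans (one_half_lt_nearCriticalAbscissa (by linarith))
  have hmain : ‖realMellin (ramp x (√x)) s‖ ≤ 8 * √x / ‖s‖ := by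
    refine (norm_realMellin_ramp_le hx₀ (Real.sqrt_pos.mpr hx₀) hre).trans ?_
    rw [hs]
    gcongr
    exact add_sqrt_rpow_nearCriticalAbscissa_le hx
  have hinit : ‖realMellin (ramp 1 1) s‖ ≤ 4 * √x / ‖s‖ := by
    refine (norm_realMellin_ramp_le one_pos one_pos hre).trans ?_
    rw [hs, one_add_one_eq_two]
    gcongr
    linarith [two_rpow_nearCriticalAbscissa_le hx, Real.one_le_sqrt.mpr (one_le_two.trans hx)]
  calc ‖realMellin (trapezoid x) s‖ ≤ 8 * √x / ‖s‖ + 4 * √x / ‖s‖ :=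
        (norm_realMellin_trapezoid_le_add hx₀ hre).trans (add_le_add hmain hinit)
    _ = 12 * √x / ‖s‖ := by ring

lemma norm_realMellin_trapezoid_le_quadratic (hx : 2 ≤ x) (hs : s.re = nearCriticalAbscissa x) :
    ‖realMellin (trapezoid x) s‖ ≤ 40 * x / (‖s‖ * ‖s + 1‖) := by
  have hx₀ : 0 < x := by linarith
  have hsqrt : 0 < √x := Real.sqrt_pos.mpr hx₀
  have hre : 0 < s.re := by
    rw [hs]
    exact one_half_pos.trans (one_half_lt_nearCriticalAbscissa (by linarith))
  have hmain : ‖realMellin (ramp x (√x)) s‖ ≤ 32 * x / (‖s‖ * ‖s + 1‖) := by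
    refine (norm_realMellin_ramp_le_quadratic hx₀ hsqrt hre).trans ?_
    rw [hs, Real.rpow_add (add_pos hx₀ hsqrt), Real.rpow_one]
    gcongr
    calc 2 * ((x + √x) ^ nearCriticalAbscissa x * (x + √x)) / √x
        ≤ 2 * (8 * √x * (2 * x)) / √x := by
          gcongr
          · exact add_sqrt_rpow_nearCriticalAbscissa_le hx
          · linarith [sqrt_le_self_of_one_le (x := x) (by linarith)]
      _ = 32 * x := by
          field_simp
          norm_num
  have hinit : ‖realMellin (ramp 1 1) s‖ ≤ 8 * x / (‖s‖ * ‖s + 1‖) := by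
    refine (norm_realMellin_ramp_le_quadratic one_pos one_pos hre).trans ?_
    rw [hs, one_add_one_eq_two, Real.rpow_add two_pos, Real.rpow_one, div_one]
    gcongr ?_ / _
    linarith [two_rpow_nearCriticalAbscissa_le hx]
  calc ‖realMellin (trapezoid x) s‖ ≤ 32 * x / (‖s‖ * ‖s + 1‖) + 8 * x / (‖s‖ * ‖s + 1‖) :=
        (norm_realMellin_trapezoid_le_add hx₀ hre).trans (add_le_add hmain hinit)
    _ = 40 * x / (‖s‖ * ‖s + 1‖) := by ring

lemma one_add_abs_im_le_mul_norm (hA : 0 < A) (hs : A ≤ s.re) :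
    1 + |s.im| ≤ (1 + 1 / A) * ‖s‖ := by
  have hnorm : 1 ≤ 1 / A * ‖s‖ := by
    rw [one_div, ← div_eq_inv_mul, one_le_div hA]
    exact hs.trans (re_le_norm s)
  linarith [abs_im_le_norm s]

lemma norm_realMellin_trapezoid_le (hx : 2 ≤ x) (t : ℝ) :
    ‖realMellin (trapezoid x) (nearCriticalAbscissa x + t * I)‖ ≤
      276 * √x * ((1 + |t|) * (1 + |t| / √x))⁻¹ := by
  set s : ℂ := nearCriticalAbscissa x + t * I
  have hs : s.re = nearCriticalAbscissa x := re_vertical _ t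
  have hre : 1 / 2 < s.re := hs ▸ one_half_lt_nearCriticalAbscissa (by linarith)
  have hnorm : 1 + |t| ≤ 3 * ‖s‖ := by
    have h := one_add_abs_im_le_mul_norm one_half_pos hre.le
    rw [im_vertical] at h
    linarith
  have hnorm_add : 1 + |t| ≤ 2 * ‖s + 1‖ := by
    have h := one_add_abs_im_le_mul_norm (s := s + 1) one_pos (by rw [add_re, one_re]; linarith)
    rw [add_im, im_vertical, one_im, add_zero] at h
    linarith
  have hs₀ : 0 < ‖s‖ := by linarith [abs_nonneg t]
  have hs₁ : 0 < ‖s + 1‖ := by linarith [abs_nonneg t]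
  set k := ‖realMellin (trapezoid x) s‖
  have hlinear : k * (1 + |t|) ≤ 36 * √x :=
    calc k * (1 + |t|) ≤ 12 * √x / ‖s‖ * (3 * ‖s‖) := by
          gcongr
          exact norm_realMellin_trapezoid_le_linear hx hs
      _ = 36 * √x := by
          field_simp
          norm_num
  have hquadratic : k * (1 + |t|) ^ 2 ≤ 240 * x :=
    calc k * (1 + |t|) ^ 2 ≤ 40 * x / (‖s‖ * ‖s + 1‖) * (3 * ‖s‖ * (2 * ‖s + 1‖)) := by
          rw [sq]
          gcongr
          exact norm_realMellin_trapezoid_le_quadratic hx hs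
      _ = 240 * x := by
          field_simp
          norm_num
  rw [← div_eq_mul_inv, le_div_iff₀ (by positivity)]
  calc k * ((1 + |t|) * (1 + |t| / √x)) = k * (1 + |t|) + k * (1 + |t|) * |t| / √x := by ring
    _ ≤ k * (1 + |t|) + k * (1 + |t|) ^ 2 / √x := by
        rw [sq, ← mul_assoc]
        gcongr
        linarith
    _ ≤ 36 * √x + 240 * x / √x := by gcongr
    _ = 276 * √x := by
        rw [mul_div_assoc, Real.div_sqrt]
        ring

end Trapezoid

section LocalAverage

open MeasureTheory Set

lemma lintegral_eq_lintegral_setLIntegral_add {g : ℝ → ENNReal} (hg : Measurable g) :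
    ∫⁻ t, g t = ∫⁻ T, ∫⁻ v in Ioc (-(1 / 2)) (1 / 2), g (T + v) := by
  rw [lintegral_lintegral_swap (by fun_prop)]
  simp only [lintegral_add_right_eq_self g, setLIntegral_const, Real.volume_Ioc]
  norm_num

lemma lintegral_mul_le_integral_mul {R κ : ℝ → ℝ} {W l : ℝ} (hR : Continuous R) (hR₀ : ∀ v, 0 ≤ R v)
    {T : ℝ} (hκ₀ : 0 ≤ κ T) (hl : ∫ v in (T - 1 / 2)..(T + 1 / 2), R v ≤ l)
    (hκW : ∀ v, |v - T| ≤ 1 / 2 → κ v ≤ W) :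
    ∫⁻ v in Ioc (-(1 / 2)) (1 / 2), ENNReal.ofReal (R (T + v) * κ (T + v)) ≤
      ENNReal.ofReal (W * l) := by
  have hW : 0 ≤ W := hκ₀.trans (hκW T (by norm_num))
  have hint : IntegrableOn (fun v ↦ W * R (T + v)) (Ioc (-(1 / 2)) (1 / 2)) :=
    Continuous.integrableOn_Ioc (by fun_prop)
  calc ∫⁻ v in Ioc (-(1 / 2)) (1 / 2), ENNReal.ofReal (R (T + v) * κ (T + v))
      ≤ ∫⁻ v in Ioc (-(1 / 2)) (1 / 2), ENNReal.ofReal (W * R (T + v)) := by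
        refine setLIntegral_mono (by fun_prop) fun v hv ↦ ENNReal.ofReal_le_ofReal ?_
        rw [mul_comm W]
        refine mul_le_mul_of_nonneg_left (hκW _ ?_) (hR₀ _)
        rw [add_sub_cancel_left, abs_le]
        exact ⟨hv.1.le, hv.2⟩
    _ = ENNReal.ofReal (W * ∫ v in (T - 1 / 2)..(T + 1 / 2), R v) := by
        rw [← ofReal_integral_eq_lintegral_ofReal hint (ae_of_all _ fun v ↦ mul_nonneg hW (hR₀ _)),
          integral_const_mul, ← intervalIntegral.integral_of_le (by norm_num),
          intervalIntegral.integral_comp_add_left R, ← sub_eq_add_neg]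
    _ ≤ ENNReal.ofReal (W * l) := by gcongr

theorem integral_mul_le_integral_mul_of_local {R κ W l : ℝ → ℝ} (hR : Continuous R)
    (hR₀ : ∀ v, 0 ≤ R v) (hκ : Continuous κ) (hκ₀ : ∀ v, 0 ≤ κ v)
    (hl : ∀ T, ∫ v in (T - 1 / 2)..(T + 1 / 2), R v ≤ l T)
    (hκW : ∀ T v, |v - T| ≤ 1 / 2 → κ v ≤ W T) (hint : Integrable fun T ↦ W T * l T) :
    ∫ t, R t * κ t ≤ ∫ T, W T * l T := by
  have hWl (T : ℝ) : 0 ≤ W T * l T :=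
    mul_nonneg ((hκ₀ T).trans (hκW T T (by norm_num)))
      ((intervalIntegral.integral_nonneg (by linarith) fun v _ ↦ hR₀ v).trans (hl T))
  rw [integral_eq_lintegral_of_nonneg_ae (ae_of_all _ fun t ↦ mul_nonneg (hR₀ t) (hκ₀ t))
    (hR.mul hκ).aestronglyMeasurable]
  refine ENNReal.toReal_le_of_le_ofReal (integral_nonneg hWl) ?_
  rw [lintegral_eq_lintegral_setLIntegral_add (by fun_prop),
    ofReal_integral_eq_lintegral_ofReal hint (ae_of_all _ hWl)]
  exact lintegral_mono fun T ↦ lintegral_mul_le_integral_mul hR hR₀ (hκ₀ T) (hl T) (hκW T)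

end LocalAverage

section Damping

open MeasureTheory Set

variable {Y T : ℝ}

lemma inv_one_add_mul_sqrt_le_rpow (hY : 1 ≤ Y) (hT : 0 ≤ T) :
    ((1 + T) * √(1 + T / Y))⁻¹ ≤ √Y * (1 + T) ^ (-(3 / 2) : ℝ) := by
  have hY₀ : 0 < Y := zero_lt_one.trans_le hY
  have hrpow : (1 + T) ^ (-(3 / 2) : ℝ) = ((1 + T) * √(1 + T))⁻¹ := by
    rw [Real.rpow_neg (by positivity), show (3 / 2 : ℝ) = 1 + 1 / 2 by norm_num,
      Real.rpow_add (by positivity), Real.rpow_one, Real.sqrt_eq_rpow]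
  have hsqrt : √(1 + T) ≤ √Y * √(1 + T / Y) := by
    rw [← Real.sqrt_mul hY₀.le, mul_add, mul_one, mul_div_cancel₀ _ hY₀.ne']
    gcongr
  rw [hrpow, ← div_eq_mul_inv, le_div_iff₀ (by positivity), inv_mul_le_iff₀ (by positivity)]
  calc (1 + T) * √(1 + T) ≤ (1 + T) * (√Y * √(1 + T / Y)) := by gcongr
    _ = (1 + T) * √(1 + T / Y) * √Y := by ring

lemma integrable_inv_one_add_abs_mul_sqrt (hY : 1 ≤ Y) :
    Integrable fun T : ℝ ↦ ((1 + |T|) * √(1 + |T| / Y))⁻¹ := by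
  have : 0 < Y := zero_lt_one.trans_le hY
  have hdom : Integrable fun T : ℝ ↦ √Y * (1 + ‖T‖) ^ (-(3 / 2) : ℝ) :=
    (integrable_one_add_norm (by norm_num)).const_mul _
  have hcont : Continuous fun T : ℝ ↦ ((1 + |T|) * √(1 + |T| / Y))⁻¹ :=
    Continuous.inv₀ (by fun_prop) fun T ↦ by positivity
  refine hdom.mono' hcont.aestronglyMeasurable (ae_of_all _ fun T ↦ ?_)
  rw [Real.norm_of_nonneg (by positivity)]
  exact inv_one_add_mul_sqrt_le_rpow hY (abs_nonneg T)

lemma integral_Ioc_inv_one_add_mul_sqrt_le (hY : 0 < Y) :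
    ∫ T in Ioc 0 Y, ((1 + T) * √(1 + T / Y))⁻¹ ≤ Real.log (1 + Y) := by
  have hpos {T : ℝ} (hT : T ∈ Icc 0 Y) : 0 < 1 + T := by linarith [hT.1]
  have hcont : ContinuousOn (fun T : ℝ ↦ (1 + T)⁻¹) (Icc 0 Y) :=
    ContinuousOn.inv₀ (by fun_prop) fun T hT ↦ (hpos hT).ne'
  have hsqrt {T : ℝ} (hT : T ∈ Icc 0 Y) : 1 ≤ √(1 + T / Y) :=
    Real.one_le_sqrt.mpr (le_add_of_nonneg_right (div_nonneg hT.1 hY.le))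
  have hcont' : ContinuousOn (fun T : ℝ ↦ ((1 + T) * √(1 + T / Y))⁻¹) (Icc 0 Y) :=
    ContinuousOn.inv₀ (by fun_prop) fun T hT ↦
      (mul_pos (hpos hT) (zero_lt_one.trans_le (hsqrt hT))).ne'
  calc ∫ T in Ioc 0 Y, ((1 + T) * √(1 + T / Y))⁻¹ ≤ ∫ T in Ioc 0 Y, (1 + T)⁻¹ := by
        refine setIntegral_mono_on (hcont'.integrableOn_Icc.mono_set Ioc_subset_Icc_self)
          (hcont.integrableOn_Icc.mono_set Ioc_subset_Icc_self) measurableSet_Ioc fun T hT ↦ ?_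
        have hT' := Ioc_subset_Icc_self hT
        exact inv_anti₀ (hpos hT') (le_mul_of_one_le_right (hpos hT').le (hsqrt hT'))
    _ = Real.log (1 + Y) := by
        rw [← intervalIntegral.integral_of_le hY.le,
          intervalIntegral.integral_comp_add_left fun T ↦ T⁻¹,
          integral_inv_of_pos (by norm_num) (by linarith), add_zero, div_one]

lemma integral_Ioi_inv_one_add_mul_sqrt_le (hY : 1 ≤ Y)
    (hint : IntegrableOn (fun T : ℝ ↦ ((1 + T) * √(1 + T / Y))⁻¹) (Ioi Y)) :
    ∫ T in Ioi Y, ((1 + T) * √(1 + T / Y))⁻¹ ≤ 2 := by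
  have hY₀ : 0 < Y := zero_lt_one.trans_le hY
  calc ∫ T in Ioi Y, ((1 + T) * √(1 + T / Y))⁻¹ ≤ ∫ T in Ioi Y, √Y * T ^ (-(3 / 2) : ℝ) := by
        refine setIntegral_mono_on hint
          ((integrableOn_Ioi_rpow_of_lt (by norm_num) hY₀).const_mul _) measurableSet_Ioi
          fun T hT ↦ ?_
        have hT₀ : 0 < T := hY₀.trans hT
        refine (inv_one_add_mul_sqrt_le_rpow hY hT₀.le).trans ?_
        gcongr √Y * ?_
        exact Real.rpow_le_rpow_of_nonpos hT₀ (by linarith) (by norm_num)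
    _ = 2 := by
        have hsqrt : √Y ≠ 0 := (Real.sqrt_pos.mpr hY₀).ne'
        rw [integral_const_mul, integral_Ioi_rpow_of_lt (by norm_num) hY₀,
          show (-(3 / 2) : ℝ) + 1 = -(1 / 2) by norm_num, Real.rpow_neg hY₀.le,
          ← Real.sqrt_eq_rpow]
        field_simp

lemma integral_inv_one_add_abs_mul_sqrt_le (hY : 1 ≤ Y) :
    ∫ T : ℝ, ((1 + |T|) * √(1 + |T| / Y))⁻¹ ≤ 2 * (Real.log (1 + Y) + 2) := by
  have hY₀ : 0 < Y := zero_lt_one.trans_le hY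
  have hint : IntegrableOn (fun T : ℝ ↦ ((1 + T) * √(1 + T / Y))⁻¹) (Ioi 0) :=
    (integrable_inv_one_add_abs_mul_sqrt hY).integrableOn.congr_fun
      (fun T (hT : 0 < T) ↦ by simp only [abs_of_pos hT]) measurableSet_Ioi
  have htail := hint.mono_set (Ioi_subset_Ioi hY₀.le)
  rw [integral_comp_abs (f := fun T ↦ ((1 + T) * √(1 + T / Y))⁻¹),
    ← Ioc_union_Ioi_eq_Ioi hY₀.le, setIntegral_union Ioc_disjoint_Ioi_same measurableSet_Ioi
      (hint.mono_set Ioc_subset_Ioi_self) htail]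
  gcongr
  · exact integral_Ioc_inv_one_add_mul_sqrt_le hY₀
  · exact integral_Ioi_inv_one_add_mul_sqrt_le hY htail

lemma inv_one_add_abs_mul_le_of_abs_sub_le (hY : 1 ≤ Y) {v : ℝ} (hv : |v - T| ≤ 1 / 2) :
    ((1 + |v|) * (1 + |v| / Y))⁻¹ ≤ 9 / 4 * ((1 + |T|) * (1 + |T| / Y))⁻¹ := by
  have hY₀ : 0 < Y := zero_lt_one.trans_le hY
  have hT : |T| ≤ |v| + 1 / 2 := by
    linarith [abs_sub_abs_le_abs_sub T v, abs_sub_comm T v]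
  have hfactor : 1 + |T| ≤ 3 / 2 * (1 + |v|) := by linarith [abs_nonneg v]
  have hfactor' : 1 + |T| / Y ≤ 3 / 2 * (1 + |v| / Y) := by
    have hdiv : |T| / Y ≤ |v| / Y + 1 / 2 / Y := by
      rw [← add_div]
      gcongr
    linarith [div_le_self one_half_pos.le hY, div_nonneg (abs_nonneg v) hY₀.le]
  rw [← div_eq_mul_inv, le_div_iff₀ (by positivity), inv_mul_le_iff₀ (by positivity)]
  calc (1 + |T|) * (1 + |T| / Y) ≤ 3 / 2 * (1 + |v|) * (3 / 2 * (1 + |v| / Y)) := by gcongr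
    _ = (1 + |v|) * (1 + |v| / Y) * (9 / 4) := by ring

end Damping

section SmoothedSum

open Complex MeasureTheory Set

variable {x : ℝ}

lemma log_ge_of_two_le (hx : 2 ≤ x) : 0.69 ≤ Real.log x := by
  linarith [Real.log_le_log two_pos hx, Real.log_two_gt_d9]

variable {d : ℕ} [NeZero d]

lemma log_le_log_modulus_mul (hx : 0 < x) : Real.log x ≤ Real.log (d * x) :=
  Real.log_le_log hx (le_mul_of_one_le_left hx.le (one_le_modulus d))

lemma logConductor_le_log_mul_sqrt (hx : 2 ≤ x) (T : ℝ) :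
    logConductor d T ≤ 5 * Real.log (d * x) * √(1 + |T| / √x) := by
  have hx₀ : 0 < x := by linarith
  have hd := one_le_modulus d
  have hsqrt : 0 < √x := Real.sqrt_pos.mpr hx₀
  set v := |T| / √x
  have hv : 0 ≤ v := by positivity
  have hT : |T| = √x * v := (mul_div_cancel₀ _ hsqrt.ne').symm
  have hconductor : d * (|T| + 2) ≤ (d * x) ^ 2 * (1 + v) := by
    calc d * (|T| + 2) ≤ d ^ 2 * (x ^ 2 * v + x ^ 2) := by
          rw [hT]
          gcongr
          · exact le_self_pow₀ hd two_ne_zero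
          · exact (sqrt_le_self_of_one_le (by linarith)).trans
              (le_self_pow₀ (by linarith) two_ne_zero)
          · exact hx.trans (le_self_pow₀ (by linarith) two_ne_zero)
      _ = (d * x) ^ 2 * (1 + v) := by ring
  have hlog : Real.log (1 + v) ≤ 2 * √(1 + v) := by
    have h := Real.log_le_rpow_div (x := 1 + v) (by positivity) one_half_pos
    rw [← Real.sqrt_eq_rpow] at h
    linarith
  have hone : 1 ≤ √(1 + v) := Real.one_le_sqrt.mpr (by linarith)
  have hL : 0.69 ≤ Real.log (d * x) := (log_ge_of_two_le hx).trans (log_le_log_modulus_mul hx₀)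
  calc logConductor d T ≤ Real.log ((d * x) ^ 2 * (1 + v)) :=
        Real.log_le_log (by positivity) hconductor
    _ = 2 * Real.log (d * x) + Real.log (1 + v) := by
        rw [Real.log_mul (by positivity) (by positivity), Real.log_pow, Nat.cast_ofNat]
    _ ≤ 2 * Real.log (d * x) * √(1 + v) + 3 * Real.log (d * x) * √(1 + v) := by
        refine add_le_add (le_mul_of_one_le_right (by linarith) hone) (hlog.trans ?_)
        gcongr
        linarith
    _ = 5 * Real.log (d * x) * √(1 + v) := by ring

lemma log_one_add_sqrt_add_two_le (hx : 2 ≤ x) :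
    2 * (Real.log (1 + √x) + 2) ≤ 10 * Real.log x := by
  have hlog : Real.log (1 + √x) ≤ 2 * Real.log x := by
    rw [← Nat.cast_ofNat, ← Real.log_pow]
    refine Real.log_le_log (by positivity) ?_
    nlinarith [sqrt_le_self_of_one_le (x := x) (by linarith)]
  linarith [log_ge_of_two_le hx]

lemma inv_mul_mul_sqrt (a p : ℝ) : (a * p)⁻¹ * √p = (a * √p)⁻¹ := by
  rw [mul_inv, mul_inv, mul_assoc, ← Real.sqrt_div_self, div_eq_inv_mul]

theorem exists_integral_abs_re_logDeriv_mul_norm_realMellin_le :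
    ∃ C, 0 < C ∧ ∀ (d : ℕ) [NeZero d] (χ : DirichletCharacter ℂ d), χ ≠ 1 → SatisfiesRH χ →
      ∀ x : ℝ, 2 ≤ x →
        ∫ t : ℝ, |(logDeriv (quadZeta₁ χ) (nearCriticalAbscissa x + t * I)).re| *
          ‖realMellin (trapezoid x) (nearCriticalAbscissa x + t * I)‖ ≤
        C * √x * Real.log x * Real.log (d * x) := by
  obtain ⟨C, hC, haverage⟩ := exists_integral_abs_re_logDeriv_quadZeta₁_le
  refine ⟨31050 * C, by positivity, fun d _ χ hχ hRH x hx ↦ ?_⟩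
  have hsqrt : 1 ≤ √x := Real.one_le_sqrt.mpr (by linarith)
  have hL : 0 ≤ Real.log (d * x) :=
    (Real.log_nonneg (by linarith)).trans (log_le_log_modulus_mul (by linarith))
  set A : ℝ := 3105 * C * √x * Real.log (d * x) with hA
  set W : ℝ → ℝ := fun T ↦ 276 * √x * (9 / 4 * ((1 + |T|) * (1 + |T| / √x))⁻¹)
  set l : ℝ → ℝ := fun T ↦ C * (5 * Real.log (d * x) * √(1 + |T| / √x))
  have hWl : (fun T ↦ W T * l T) = fun T ↦ A * ((1 + |T|) * √(1 + |T| / √x))⁻¹ := by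
    ext T
    simp only [W, l, ← inv_mul_mul_sqrt]
    ring
  calc _ ≤ ∫ T, W T * l T := by
        refine integral_mul_le_integral_mul_of_local ?_ (fun _ ↦ abs_nonneg _) ?_
          (fun _ ↦ norm_nonneg _) (fun T ↦ ?_) (fun T v hv ↦ ?_) ?_
        · exact (continuous_re.comp (continuous_logDeriv_quadZeta₁_vertical hχ fun v ↦
            hRH.quadZeta₁_ne_zero (by
              rw [re_vertical]
              exact one_half_lt_nearCriticalAbscissa (by linarith)))).abs
        · exact ((isMellinWeight_trapezoid (by linarith)).differentiable_realMellin.continuous.comp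
            (by fun_prop)).norm
        · exact (haverage d χ hχ hRH _ (one_div_two_mul_log_pos (by linarith))
            (by linarith [nearCriticalAbscissa_le hx, nearCriticalAbscissa.eq_1 x]) T).trans
            (mul_le_mul_of_nonneg_left (logConductor_le_log_mul_sqrt hx T) hC.le)
        · exact (norm_realMellin_trapezoid_le hx v).trans
            (mul_le_mul_of_nonneg_left (inv_one_add_abs_mul_le_of_abs_sub_le hsqrt hv)
              (by positivity))
        · rw [hWl]
          exact (integrable_inv_one_add_abs_mul_sqrt hsqrt).const_mul _
    _ ≤ A * (10 * Real.log x) := by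
        rw [hWl, integral_const_mul]
        gcongr
        exact (integral_inv_one_add_abs_mul_sqrt_le hsqrt).trans (log_one_add_sqrt_add_two_le hx)
    _ = 31050 * C * √x * Real.log x * Real.log (d * x) := by
        rw [hA]
        ring

theorem exists_abs_tsum_trapezoid_sub_integral_le :
    ∃ C, 0 < C ∧ ∀ (d : ℕ) [NeZero d] (χ : DirichletCharacter ℂ d), χ ≠ 1 →
      (∀ a, (χ a).im = 0) → SatisfiesRH χ → ∀ x : ℝ, 2 ≤ x →
        |∑' n : ℕ, quadVonMangoldt χ n * trapezoid x n - ∫ u in Ioi (1 : ℝ), trapezoid x u| ≤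
          C * √x * Real.log x * Real.log (d * x) := by
  obtain ⟨C, hC, hbound⟩ := exists_integral_abs_re_logDeriv_mul_norm_realMellin_le
  refine ⟨C, hC, fun d _ χ hχ hreal hRH x hx ↦ ?_⟩
  exact ((isMellinWeight_trapezoid (by linarith)).abs_tsum_sub_integral_le hχ hreal hRH
    (one_half_lt_nearCriticalAbscissa (by linarith)) (nearCriticalAbscissa_le hx)).trans
    (hbound d χ hχ hRH x hx)

end SmoothedSum

section PrimeSums

open ArithmeticFunction

variable {d : ℕ} {χ : DirichletCharacter ℂ d} {x y : ℝ}

/-- The summatory function of `quadVonMangoldt χ`, the analogue of Chebyshev's `ψ`. -/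
noncomputable def quadPsi (χ : DirichletCharacter ℂ d) (x : ℝ) : ℝ :=
  ∑ n ∈ Finset.Icc 0 ⌊x⌋₊, quadVonMangoldt χ n

/-- The restriction of `quadVonMangoldt χ` to the primes. -/
noncomputable def quadPrimeLog (χ : DirichletCharacter ℂ d) (n : ℕ) : ℝ :=
  if n.Prime then quadVonMangoldt χ n else 0

/-- The summatory function of `quadPrimeLog χ`, the analogue of Chebyshev's `θ`. -/
noncomputable def quadTheta (χ : DirichletCharacter ℂ d) (x : ℝ) : ℝ :=
  ∑ n ∈ Finset.Icc 0 ⌊x⌋₊, quadPrimeLog χ n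

lemma quadVonMangoldt_eq_zero_of_lt_two {n : ℕ} (hn : n < 2) : quadVonMangoldt χ n = 0 := by
  interval_cases n <;> simp [quadVonMangoldt]

lemma quadVonMangoldt_le (χ : DirichletCharacter ℂ d) (n : ℕ) :
    quadVonMangoldt χ n ≤ 2 * vonMangoldt n := by
  have hre : (χ n).re ≤ 1 := (Complex.re_le_norm _).trans (χ.norm_le_one n)
  rw [quadVonMangoldt, mul_comm]
  exact mul_le_mul_of_nonneg_right (by linarith) vonMangoldt_nonneg

lemma quadPsi_sub_quadTheta (χ : DirichletCharacter ℂ d) (x : ℝ) :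
    quadPsi χ x - quadTheta χ x =
      ∑ n ∈ Finset.Icc 0 ⌊x⌋₊, if n.Prime then 0 else quadVonMangoldt χ n := by
  rw [quadPsi, quadTheta, ← Finset.sum_sub_distrib]
  refine Finset.sum_congr rfl fun n _ ↦ ?_
  rw [quadPrimeLog]
  split_ifs <;> ring

lemma chebyshev_psi_sub_theta (x : ℝ) :
    Chebyshev.psi x - Chebyshev.theta x =
      ∑ n ∈ Finset.Icc 0 ⌊x⌋₊, if n.Prime then 0 else vonMangoldt n := by
  rw [Chebyshev.psi_eq_sum_Icc, Chebyshev.theta_eq_sum_Icc, Finset.sum_filter,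
    ← Finset.sum_sub_distrib]
  refine Finset.sum_congr rfl fun n _ ↦ ?_
  split_ifs with hn
  · rw [vonMangoldt_apply_prime hn, sub_self]
  · rw [sub_zero]

lemma quadTheta_le_quadPsi (χ : DirichletCharacter ℂ d) (x : ℝ) :
    quadTheta χ x ≤ quadPsi χ x := by
  rw [← sub_nonneg, quadPsi_sub_quadTheta]
  refine Finset.sum_nonneg fun n _ ↦ ?_
  split_ifs
  exacts [le_rfl, quadVonMangoldt_nonneg χ n]

lemma quadPsi_sub_quadTheta_le (χ : DirichletCharacter ℂ d) (hx : 1 ≤ x) :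
    quadPsi χ x - quadTheta χ x ≤ 4 * √x * Real.log x := by
  have hle : quadPsi χ x - quadTheta χ x ≤ 2 * (Chebyshev.psi x - Chebyshev.theta x) := by
    rw [quadPsi_sub_quadTheta, chebyshev_psi_sub_theta, Finset.mul_sum]
    refine Finset.sum_le_sum fun n _ ↦ ?_
    split_ifs
    exacts [(mul_zero _).ge, quadVonMangoldt_le χ n]
  linarith [Chebyshev.psi_sub_theta_le hx]

lemma tsum_trapezoid_eq_sum (χ : DirichletCharacter ℂ d) (hy : 1 ≤ y) (hyx : y + √y ≤ x) :
    ∑' n : ℕ, quadVonMangoldt χ n * trapezoid y n =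
      ∑ n ∈ Finset.Icc 0 ⌊x⌋₊, quadVonMangoldt χ n * trapezoid y n := by
  refine tsum_eq_sum fun n hn ↦ ?_
  have hxn : x < n := Nat.lt_of_floor_lt (by simpa using hn)
  rw [trapezoid_eq_zero_of_add_sqrt_le hy (hyx.trans hxn.le), mul_zero]

lemma tsum_trapezoid_le_quadPsi (χ : DirichletCharacter ℂ d) (hy : 2 ≤ y) (hyx : y + √y ≤ x) :
    ∑' n : ℕ, quadVonMangoldt χ n * trapezoid y n ≤ quadPsi χ x := by
  rw [tsum_trapezoid_eq_sum χ (by linarith) hyx, quadPsi]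
  exact Finset.sum_le_sum fun n _ ↦
    mul_le_of_le_one_right (quadVonMangoldt_nonneg χ n) (trapezoid_mem_Icc hy n).2

lemma quadPsi_le_tsum_trapezoid (χ : DirichletCharacter ℂ d) (hx : 2 ≤ x) :
    quadPsi χ x ≤ ∑' n : ℕ, quadVonMangoldt χ n * trapezoid x n := by
  have hpsi : quadPsi χ x = ∑ n ∈ Finset.Icc 0 ⌊x⌋₊, quadVonMangoldt χ n * trapezoid x n := by
    refine Finset.sum_congr rfl fun n hn ↦ ?_
    rcases lt_or_ge n 2 with hn₂ | hn₂
    · rw [quadVonMangoldt_eq_zero_of_lt_two hn₂, zero_mul]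
    · rw [trapezoid_eq_one (by linarith) (mod_cast hn₂), mul_one]
      exact (Nat.le_floor_iff (by linarith)).mp (Finset.mem_Icc.mp hn).2
  rw [hpsi, tsum_trapezoid_eq_sum χ (by linarith) le_rfl]
  refine Finset.sum_le_sum_of_subset_of_nonneg ?_ fun n _ _ ↦
    mul_nonneg (quadVonMangoldt_nonneg χ n) (trapezoid_mem_Icc hx n).1
  gcongr
  exact le_add_of_nonneg_right (Real.sqrt_nonneg x)

variable [NeZero d] {C : ℝ}

lemma sqrt_add_two_le (hx : 2 ≤ x) :
    √x + 2 ≤ 6 * (√x * Real.log x * Real.log (d * x)) := by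
  have hlog := log_ge_of_two_le hx
  have hlog_mul : 0.69 ≤ Real.log (d * x) :=
    hlog.trans (log_le_log_modulus_mul (by linarith))
  have hsqrt : 1.41 ≤ √x := Real.le_sqrt_of_sq_le (by norm_num; linarith)
  have hprod : 0.69 * 0.69 ≤ Real.log x * Real.log (d * x) := by gcongr
  nlinarith

lemma sqrt_mul_log_mul_log_mono (hy : 1 ≤ y) (hyx : y ≤ x) :
    √y * Real.log y * Real.log (d * y) ≤ √x * Real.log x * Real.log (d * x) := by
  have hd := one_le_modulus d
  have := Real.log_nonneg hy
  have := Real.log_nonneg (hy.trans hyx)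
  have := Real.log_nonneg (one_le_mul_of_one_le_of_one_le hd hy)
  gcongr

lemma abs_quadPsi_sub_le (hC : 0 ≤ C)
    (hsmooth : ∀ y : ℝ, 2 ≤ y →
      |∑' n : ℕ, quadVonMangoldt χ n * trapezoid y n - ∫ u in Set.Ioi (1 : ℝ), trapezoid y u| ≤
        C * (√y * Real.log y * Real.log (d * y)))
    (hx : 2 ≤ x) :
    |quadPsi χ x - x| ≤ (C + 6) * (√x * Real.log x * Real.log (d * x)) := by
  have hsqrt := sqrt_add_two_le (d := d) hx
  rw [abs_le]
  constructor
  · rcases lt_or_ge x 4 with hx₄ | hx₄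
    · have hpsi : 0 ≤ quadPsi χ x := Finset.sum_nonneg fun n _ ↦ quadVonMangoldt_nonneg χ n
      have hsqrt₂ : x ≤ √x + 2 := by
        nlinarith [Real.mul_self_sqrt (zero_le_two.trans hx), Real.sqrt_nonneg x]
      nlinarith [mul_nonneg hC (by linarith [Real.sqrt_nonneg x] :
        0 ≤ √x * Real.log x * Real.log (d * x))]
    · have hmul : √x * √x = x := Real.mul_self_sqrt (by linarith)
      have hsqrt₂ : 2 ≤ √x := Real.le_sqrt_of_sq_le (by linarith)
      have hy : 2 ≤ x - √x := by nlinarith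
      have hyx : x - √x ≤ x := sub_le_self _ (Real.sqrt_nonneg x)
      have hle := tsum_trapezoid_le_quadPsi χ hy (x := x)
        (by linarith [Real.sqrt_le_sqrt hyx])
      have hmono := mul_le_mul_of_nonneg_left
        (sqrt_mul_log_mul_log_mono (d := d) (by linarith) hyx) hC
      linarith [(abs_le.mp (hsmooth _ hy)).1, (integral_trapezoid_mem_Icc hy).1]
  · linarith [quadPsi_le_tsum_trapezoid χ hx, (abs_le.mp (hsmooth x hx)).2,
      (integral_trapezoid_mem_Icc hx).2]

theorem exists_abs_quadTheta_sub_le :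
    ∃ C, 0 < C ∧ ∀ (d : ℕ) [NeZero d] (χ : DirichletCharacter ℂ d), χ ≠ 1 →
      (∀ a, (χ a).im = 0) → SatisfiesRH χ → ∀ x : ℝ, 2 ≤ x →
        |quadTheta χ x - x| ≤ C * √x * Real.log x * Real.log (d * x) := by
  obtain ⟨C, hC, hsmooth⟩ := exists_abs_tsum_trapezoid_sub_integral_le
  refine ⟨C + 12, by positivity, fun d _ χ hχ hreal hRH x hx ↦ ?_⟩
  have hpsi := abs_quadPsi_sub_le hC.le
    (fun y hy ↦ (hsmooth d χ hχ hreal hRH y hy).trans_eq (by ring)) hx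
  have hlog : 0.69 ≤ Real.log (d * x) :=
    (log_ge_of_two_le hx).trans (log_le_log_modulus_mul (by linarith))
  have hpowers : 4 * √x * Real.log x ≤ 6 * (√x * Real.log x * Real.log (d * x)) := by
    have : 0 ≤ √x * Real.log x :=
      mul_nonneg (Real.sqrt_nonneg x) (Real.log_nonneg (by linarith))
    nlinarith
  rw [abs_le] at hpsi ⊢
  constructor <;>
  linarith [quadTheta_le_quadPsi χ x, quadPsi_sub_quadTheta_le χ (x := x) (by linarith)]

end PrimeSums

section PartialSummation

open MeasureTheory Set

variable {c : ℕ → ℝ} {g : ℝ → ℝ} {x A : ℝ}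

lemma hasDerivAt_inv_log {t : ℝ} (ht : 2 ≤ t) :
    HasDerivAt (fun t ↦ (Real.log t)⁻¹) (-(t * Real.log t ^ 2)⁻¹) t := by
  have hlog : Real.log t ≠ 0 := by linarith [log_ge_of_two_le ht]
  have ht₀ : t ≠ 0 := by linarith
  refine ((Real.hasDerivAt_log ht₀).inv hlog).congr_deriv ?_
  field_simp

lemma continuousOn_inv_mul_log_sq : ContinuousOn (fun t ↦ (t * Real.log t ^ 2)⁻¹) (Icc 2 x) := by
  refine ContinuousOn.inv₀ (continuousOn_id.mul ((Real.continuousOn_log.mono ?_).pow 2)) ?_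
  · intro t ht
    exact (zero_lt_two.trans_le ht.1).ne'
  · intro t ht
    have : 0 < Real.log t := by linarith [log_ge_of_two_le ht.1]
    have : 0 < t := by linarith [ht.1]
    positivity

lemma Li_eq_div_log_add_integral (hx : 2 ≤ x) :
    Li x = x / Real.log x - 2 / Real.log 2 + ∫ t in (2 : ℝ)..x, (t * Real.log t ^ 2)⁻¹ * t := by
  have hparts := intervalIntegral.integral_mul_deriv_eq_deriv_mul (a := 2) (b := x)
    (u := fun t ↦ (Real.log t)⁻¹) (u' := fun t ↦ -(t * Real.log t ^ 2)⁻¹) (v := id)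
    (v' := fun _ ↦ 1) (fun t ht ↦ hasDerivAt_inv_log (uIcc_of_le hx ▸ ht).1)
    (fun t _ ↦ hasDerivAt_id t)
    (ContinuousOn.intervalIntegrable (uIcc_of_le hx ▸ continuousOn_inv_mul_log_sq.neg))
    intervalIntegrable_const
  simp only [mul_one, id, neg_mul, intervalIntegral.integral_neg, ← one_div] at hparts
  rw [Li, hparts]
  simp only [one_div]
  ring

lemma sum_inv_log_mul_eq (hc₀ : c 0 = 0) (hc₁ : c 1 = 0) (hx : 2 ≤ x) :
    ∑ n ∈ Finset.Icc 0 ⌊x⌋₊, (Real.log n)⁻¹ * c n =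
      (∑ n ∈ Finset.Icc 0 ⌊x⌋₊, c n) / Real.log x +
        ∫ t in (2 : ℝ)..x, (t * Real.log t ^ 2)⁻¹ * ∑ n ∈ Finset.Icc 0 ⌊t⌋₊, c n := by
  have hderiv : EqOn (deriv fun t ↦ (Real.log t)⁻¹) (fun t ↦ -(t * Real.log t ^ 2)⁻¹)
      (Icc 2 x) := fun t ht ↦ (hasDerivAt_inv_log ht.1).deriv
  have hintegral : ∫ t in (2 : ℝ)..x,
        deriv (fun t ↦ (Real.log t)⁻¹) t * ∑ n ∈ Finset.Icc 0 ⌊t⌋₊, c n =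
      -∫ t in (2 : ℝ)..x, (t * Real.log t ^ 2)⁻¹ * ∑ n ∈ Finset.Icc 0 ⌊t⌋₊, c n := by
    rw [← intervalIntegral.integral_neg]
    refine intervalIntegral.integral_congr fun t ht ↦ ?_
    rw [uIcc_of_le hx] at ht
    simp only [hderiv ht, neg_mul]
  rw [sum_mul_eq_sub_integral_mul₁ c (f := fun t ↦ (Real.log t)⁻¹) hc₀ hc₁ x
      (fun t ht ↦ (hasDerivAt_inv_log ht.1).differentiableAt)
      (continuousOn_inv_mul_log_sq.neg.integrableOn_Icc.congr_fun hderiv.symm measurableSet_Icc),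
    ← intervalIntegral.integral_of_le hx, hintegral]
  ring

lemma abs_integral_inv_mul_log_sq_mul_le (hx : 2 ≤ x)
    (hg : ∀ t, 2 ≤ t → t ≤ x → |g t| ≤ A * √t * Real.log t) :
    |∫ t in (2 : ℝ)..x, (t * Real.log t ^ 2)⁻¹ * g t| ≤ 3 * A * √x := by
  have hA : 0 ≤ A :=
    nonneg_of_mul_nonneg_left
      (nonneg_of_mul_nonneg_left ((abs_nonneg _).trans (hg 2 le_rfl hx)) (Real.log_pos one_lt_two))
      (Real.sqrt_pos.mpr two_pos)
  have hpointwise {t : ℝ} (ht : t ∈ Ioc 2 x) :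
      |(t * Real.log t ^ 2)⁻¹ * g t| ≤ 3 / 2 * A * t ^ (-(1 / 2) : ℝ) := by
    have ht₀ : 0 < t := by linarith [ht.1]
    have hsqrt : √t * √t = t := Real.mul_self_sqrt ht₀.le
    have hlog := log_ge_of_two_le ht.1.le
    have hlog₀ : 0 < Real.log t := by linarith
    have hinv : (Real.log t)⁻¹ ≤ 3 / 2 := inv_le_of_inv_le₀ (by norm_num) (by linarith)
    rw [abs_mul, abs_of_pos (by positivity), Real.rpow_neg ht₀.le, ← Real.sqrt_eq_rpow]
    calc (t * Real.log t ^ 2)⁻¹ * |g t|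
        ≤ (t * Real.log t ^ 2)⁻¹ * (A * √t * Real.log t) := by
          gcongr
          exact hg t ht.1.le ht.2
      _ = (Real.log t)⁻¹ * A * (√t)⁻¹ := by
          nth_rw 1 [← hsqrt]
          field_simp
      _ ≤ 3 / 2 * A * (√t)⁻¹ := by gcongr
  have hint : IntervalIntegrable (fun t : ℝ ↦ 3 / 2 * A * t ^ (-(1 / 2) : ℝ)) volume 2 x :=
    (intervalIntegral.intervalIntegrable_rpow' (by norm_num)).const_mul _
  rw [← Real.norm_eq_abs]
  calc ‖∫ t in (2 : ℝ)..x, (t * Real.log t ^ 2)⁻¹ * g t‖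
      ≤ ∫ t in (2 : ℝ)..x, 3 / 2 * A * t ^ (-(1 / 2) : ℝ) :=
        intervalIntegral.norm_integral_le_of_norm_le hx (ae_of_all _ fun _ ↦ hpointwise) hint
    _ = 3 * A * (√x - √2) := by
        rw [intervalIntegral.integral_const_mul, integral_rpow (Or.inl (by norm_num)),
          show (-(1 / 2) : ℝ) + 1 = 1 / 2 by norm_num, ← Real.sqrt_eq_rpow, ← Real.sqrt_eq_rpow]
        ring
    _ ≤ 3 * A * √x := by
        gcongr
        exact sub_le_self _ (Real.sqrt_nonneg 2)

theorem abs_sum_inv_log_mul_sub_Li_le (hc₀ : c 0 = 0) (hc₁ : c 1 = 0) (hx : 2 ≤ x)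
    (hc : ∀ t, 2 ≤ t → t ≤ x → |∑ n ∈ Finset.Icc 0 ⌊t⌋₊, c n - t| ≤ A * √t * Real.log t) :
    |∑ n ∈ Finset.Icc 0 ⌊x⌋₊, (Real.log n)⁻¹ * c n - Li x| ≤ 4 * A * √x + 3 := by
  have hlog : 0 < Real.log x := by linarith [log_ge_of_two_le hx]
  set S : ℝ → ℝ := fun t ↦ ∑ n ∈ Finset.Icc 0 ⌊t⌋₊, c n
  have hintS : IntervalIntegrable (fun t ↦ (t * Real.log t ^ 2)⁻¹ * S t) volume 2 x :=
    (intervalIntegrable_iff_integrableOn_Icc_of_le hx).mpr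
      (integrableOn_mul_sum_Icc _ zero_le_two continuousOn_inv_mul_log_sq.integrableOn_Icc)
  have hint : IntervalIntegrable (fun t ↦ (t * Real.log t ^ 2)⁻¹ * t) volume 2 x :=
    ContinuousOn.intervalIntegrable
      (uIcc_of_le hx ▸ continuousOn_inv_mul_log_sq.mul continuousOn_id)
  have hsplit : ∑ n ∈ Finset.Icc 0 ⌊x⌋₊, (Real.log n)⁻¹ * c n - Li x =
      (S x - x) / Real.log x + 2 / Real.log 2 +
        ∫ t in (2 : ℝ)..x, (t * Real.log t ^ 2)⁻¹ * (S t - t) := by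
    simp only [mul_sub]
    rw [sum_inv_log_mul_eq hc₀ hc₁ hx, Li_eq_div_log_add_integral hx,
      intervalIntegral.integral_sub hintS hint]
    ring
  have hmain : |(S x - x) / Real.log x| ≤ A * √x := by
    rw [abs_div, abs_of_pos hlog, div_le_iff₀ hlog]
    exact hc x hx le_rfl
  have hconst : |2 / Real.log 2| ≤ 3 := by
    have hlog_two := log_ge_of_two_le le_rfl
    rw [abs_of_pos (by positivity), div_le_iff₀ (by positivity)]
    linarith
  rw [hsplit]
  linarith [abs_add_three ((S x - x) / Real.log x) (2 / Real.log 2)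
    (∫ t in (2 : ℝ)..x, (t * Real.log t ^ 2)⁻¹ * (S t - t)),
    abs_integral_inv_mul_log_sq_mul_le hx hc]

end PartialSummation

section PrimeCounting

variable {d : ℕ} {χ : DirichletCharacter ℂ d}

lemma apply_eq_one_or_neg_one (hreal : ∀ a, (χ a).im = 0) {a : ZMod d} (ha : IsUnit a) :
    χ a = 1 ∨ χ a = -1 := by
  have hre : χ a = ((χ a).re : ℂ) := Complex.ext rfl (hreal a)
  have hnorm : ‖χ a‖ = 1 := χ.unit_norm_eq_one ha.unit
  rw [hre, Complex.norm_real, Real.norm_eq_abs, abs_eq zero_le_one] at hnorm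
  rw [hre]
  exact hnorm.imp (fun h ↦ by rw [h, Complex.ofReal_one])
    fun h ↦ by rw [h, Complex.ofReal_neg, Complex.ofReal_one]

lemma one_add_re_apply_prime (hreal : ∀ a, (χ a).im = 0) {p : ℕ} (hp : p.Prime) :
    1 + (χ p).re = 2 * (if χ p = 1 then 1 else 0) + if p ∣ d then 1 else 0 := by
  have hunit : IsUnit (p : ZMod d) ↔ ¬p ∣ d := by
    rw [ZMod.isUnit_iff_coprime, hp.coprime_iff_not_dvd]
  by_cases hpd : p ∣ d
  · rw [χ.map_nonunit (fun h ↦ hunit.mp h hpd)]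
    simp [hpd]
  · rcases apply_eq_one_or_neg_one hreal (hunit.mpr hpd) with h | h
    · simp only [h, Complex.one_re, if_true, if_neg hpd]
      norm_num
    · have : (-1 : ℂ) ≠ 1 := by norm_num
      simp [h, hpd, this]

lemma inv_log_mul_quadPrimeLog (n : ℕ) :
    (Real.log n)⁻¹ * quadPrimeLog χ n = if n.Prime then 1 + (χ n).re else 0 := by
  rw [quadPrimeLog]
  split_ifs with hn
  · have hlog : Real.log n ≠ 0 := (Real.log_pos (mod_cast hn.one_lt)).ne'
    rw [quadVonMangoldt, ArithmeticFunction.vonMangoldt_apply_prime hn, inv_mul_cancel_left₀ hlog]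
  · rw [mul_zero]

lemma sum_inv_log_mul_quadPrimeLog (hreal : ∀ a, (χ a).im = 0) (N : ℕ) :
    ∑ n ∈ Finset.Icc 0 N, (Real.log n)⁻¹ * quadPrimeLog χ n =
      2 * ((Finset.Icc 1 N).filter fun p : ℕ ↦ p.Prime ∧ χ (p : ZMod d) = 1).card +
        ((Finset.Icc 1 N).filter fun p : ℕ ↦ p.Prime ∧ p ∣ d).card := by
  rw [← Finset.sum_subset (Finset.Icc_subset_Icc_left zero_le_one), Finset.natCast_card_filter,
    Finset.natCast_card_filter, Finset.mul_sum, ← Finset.sum_add_distrib]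
  · refine Finset.sum_congr rfl fun n _ ↦ ?_
    by_cases hn : n.Prime
    · simp only [inv_log_mul_quadPrimeLog, hn, if_true, true_and, one_add_re_apply_prime hreal hn]
    · simp only [inv_log_mul_quadPrimeLog, hn, if_false, false_and, mul_zero, add_zero]
  · intro n hn hn₁
    have hn₀ : n = 0 := by
      simp only [Finset.mem_Icc] at hn hn₁
      lia
    rw [inv_log_mul_quadPrimeLog, if_neg (hn₀ ▸ Nat.not_prime_zero)]

lemma card_primeFactors_le_two_mul_log (hd : d ≠ 0) :
    (d.primeFactors.card : ℝ) ≤ 2 * Real.log d := by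
  have hpow : 2 ^ d.primeFactors.card ≤ d :=
    calc 2 ^ d.primeFactors.card ≤ ∏ p ∈ d.primeFactors, p :=
          Finset.pow_card_le_prod _ _ _ fun p hp ↦ (Nat.prime_of_mem_primeFactors hp).two_le
      _ ≤ d := Nat.le_of_dvd (Nat.pos_of_ne_zero hd) (Nat.prod_primeFactors_dvd d)
  have hlog : d.primeFactors.card * Real.log 2 ≤ Real.log d := by
    rw [← Real.log_pow]
    exact Real.log_le_log (by positivity) (mod_cast hpow)
  nlinarith [log_ge_of_two_le le_rfl, Nat.cast_nonneg (α := ℝ) d.primeFactors.card]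

lemma abs_two_mul_card_sub_sum_le [NeZero d] (hreal : ∀ a, (χ a).im = 0) (N : ℕ) :
    |2 * (((Finset.Icc 1 N).filter fun p : ℕ ↦ p.Prime ∧ χ (p : ZMod d) = 1).card : ℝ) -
      ∑ n ∈ Finset.Icc 0 N, (Real.log n)⁻¹ * quadPrimeLog χ n| ≤ 2 * Real.log d := by
  have hsubset : (Finset.Icc 1 N).filter (fun p : ℕ ↦ p.Prime ∧ p ∣ d) ⊆ d.primeFactors :=
    fun p hp ↦ Nat.mem_primeFactors.mpr
      ⟨(Finset.mem_filter.mp hp).2.1, (Finset.mem_filter.mp hp).2.2, NeZero.ne d⟩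
  rw [sum_inv_log_mul_quadPrimeLog hreal, sub_add_cancel_left, abs_neg, Nat.abs_cast]
  exact (Nat.cast_le.mpr (Finset.card_le_card hsubset)).trans
    (card_primeFactors_le_two_mul_log (NeZero.ne d))

theorem exists_abs_sum_inv_log_mul_quadPrimeLog_sub_Li_le :
    ∃ C, 0 < C ∧ ∀ (d : ℕ) [NeZero d] (χ : DirichletCharacter ℂ d), χ ≠ 1 →
      (∀ a, (χ a).im = 0) → SatisfiesRH χ → ∀ x : ℝ, 2 ≤ x →
        |∑ n ∈ Finset.Icc 0 ⌊x⌋₊, (Real.log n)⁻¹ * quadPrimeLog χ n - Li x| ≤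
          C * √x * Real.log (d * x) + 3 := by
  obtain ⟨C, hC, htheta⟩ := exists_abs_quadTheta_sub_le
  refine ⟨4 * C, by positivity, fun d _ χ hχ hreal hRH x hx ↦ ?_⟩
  have hvanish {n : ℕ} (hn : n < 2) : quadPrimeLog χ n = 0 := by
    rw [quadPrimeLog, quadVonMangoldt_eq_zero_of_lt_two hn, ite_self]
  refine (abs_sum_inv_log_mul_sub_Li_le (A := C * Real.log (d * x)) (hvanish two_pos)
    (hvanish one_lt_two) hx fun t ht htx ↦ ?_).trans_eq (by ring)
  have hd := one_le_modulus d
  have hlog := Real.log_nonneg (one_le_two.trans ht)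
  calc |quadTheta χ t - t| ≤ C * √t * Real.log t * Real.log (d * t) :=
        htheta d χ hχ hreal hRH t ht
    _ ≤ C * √t * Real.log t * Real.log (d * x) := by gcongr
    _ = C * Real.log (d * x) * √t * Real.log t := by ring

theorem chebotarev_quadratic_general :
    ∃ C : ℝ, 0 < C ∧ ∀ (d : ℕ) [NeZero d] (χ : DirichletCharacter ℂ d),
      (∀ a, (χ a).im = 0) → χ ≠ 1 →
      (∀ s, riemannZeta s = 0 → 0 < s.re → s.re < 1 → s.re = 1 / 2) →
      (∀ s, χ.LFunction s = 0 → 0 < s.re → s.re < 1 → s.re = 1 / 2) → ∀ x : ℝ, 2 ≤ x →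
        |(((Finset.Icc 1 ⌊x⌋₊).filter (fun p : ℕ ↦ p.Prime ∧ χ (p : ZMod d) = 1)).card : ℝ)
            - (1 / 2) * Li x|
          ≤ C * x ^ ((1 : ℝ) / 2) * Real.log (d * x) := by
  obtain ⟨C, hC, hsum⟩ := exists_abs_sum_inv_log_mul_quadPrimeLog_sub_Li_le
  refine ⟨C + 4, by positivity, fun d _ χ hreal hχ hζ hL x hx ↦ ?_⟩
  have hcard := abs_two_mul_card_sub_sum_le hreal ⌊x⌋₊
  have hLi := hsum d χ hχ hreal (satisfiesRH_of_zeros hχ hζ hL) x hx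
  have hlog_le : Real.log d ≤ Real.log (d * x) :=
    Real.log_le_log (by linarith [one_le_modulus d])
      (le_mul_of_one_le_right (Nat.cast_nonneg d) (by linarith))
  have hlog : 0.69 ≤ Real.log (d * x) :=
    (log_ge_of_two_le hx).trans (log_le_log_modulus_mul (by linarith))
  have hsqrt : 1 ≤ √x := Real.one_le_sqrt.mpr (by linarith)
  have hlog_sqrt : Real.log (d * x) ≤ √x * Real.log (d * x) :=
    le_mul_of_one_le_left (by linarith) hsqrt
  have hCpos : 0 ≤ C * √x * Real.log (d * x) := by positivity
  rw [← Real.sqrt_eq_rpow]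
  obtain ⟨hcard_lower, hcard_upper⟩ := abs_le.mp hcard
  obtain ⟨hLi_lower, hLi_upper⟩ := abs_le.mp hLi
  exact abs_le.mpr ⟨by linarith, by linarith⟩

end PrimeCounting

/-- assuming GRH for quadratic fields, there is an absolute constant `C` such
that for every `d ≥ 1`, every real non-principal Dirichlet character `χ` mod `d`, and
every `x ≥ 2`, `#{p ≤ x prime : χ(p) = 1} = (1/2)·Li(x) + O(x^{1/2}·log(d·x))`. -/
theorem chebotarev_quadratic (hGRH : GRHreal) :
    ∃ C : ℝ, 0 < C ∧ ∀ d : ℕ, 0 < d → ∀ χ : DirichletCharacter ℂ d,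
      (∀ a : ZMod d, (χ a).im = 0) → χ ≠ 1 → ∀ x : ℝ, 2 ≤ x →
        |(((Finset.Icc 1 ⌊x⌋₊).filter (fun p : ℕ => p.Prime ∧ χ ((p : ℕ) : ZMod d) = 1)).card : ℝ)
            - (1 / 2) * Li x|
          ≤ C * x ^ ((1 : ℝ) / 2) * Real.log (d * x) := by
  obtain ⟨C, hC, hbound⟩ := chebotarev_quadratic_general
  refine ⟨C, hC, fun d hd χ hreal hχ ↦ ?_⟩
  have : NeZero d := ⟨hd.ne'⟩
  refine hbound d χ hreal hχ (fun s hs ↦ hGRH 1 1 (fun a ↦ ?_) s ?_) (hGRH d χ hreal)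
  · rw [Subsingleton.elim a 1, map_one, Complex.one_im]
  · rwa [DirichletCharacter.LFunction_modOne_eq]
end

section
/- For every fixed integer r ≥ 1, the number p_{n,r} of partitions of n into exactly r parts satisfies the asymptotic p_{n,r} ~ n^{r−1} / (r! · (r−1)!) as n → ∞; that is, p_{n,r} · r! · (r−1)! / n^{r−1} tends to 1. -/
/-- `p_{n,r}`: the number of partitions of `n` into exactly `r` parts. -/
noncomputable def partitionCountParts (n r : ℕ) : ℕ :=
  Nat.card {lam : Nat.Partition n // lam.parts.card = r}

/-!
Subtracting `1` from every part, partitions of `m + r` into `r` parts are the monotone `r`-tuples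
of naturals with sum `m`. Write `W m` for the number of all `r`-tuples with sum `m`, and `p` for the
number of monotone ones. Every tuple is a permutation of a monotone one, so `W m ≤ r! * p`. Adding
`i` to the `i`-th entry makes a monotone tuple strictly monotone, so that its `r!` permutations are
distinct, which gives `r! * p ≤ W (m + r.choose 2)`. Since `W m = (m + r - 1).choose (r - 1)`, both
bounds are asymptotic to `m ^ (r - 1) / (r - 1)!`.
-/

open Asymptotics Filter Finset Topology

theorem bijOn_univ_val_map_monotone (α : Type*) [LinearOrder α] (r : ℕ) :
    Set.BijOn (fun f : Fin r → α => univ.val.map f) {f | Monotone f} {s | s.card = r} := by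
  refine ⟨fun f _ => by simp, fun f hf g hg hfg => ?_, ?_⟩
  · have hperm : (List.ofFn f).Perm (List.ofFn g) := by simpa using hfg
    exact List.ofFn_injective
      (hperm.eq_of_sortedLE (Monotone.sortedLE_ofFn hf) (Monotone.sortedLE_ofFn hg))
  · rintro s rfl
    have hlen : s.sort.length = s.card := s.length_sort (· ≤ ·)
    refine ⟨fun i => s.sort.get (i.cast hlen.symm), ?_, ?_⟩
    · exact (s.pairwise_sort (· ≤ ·)).sortedLE.monotone_get.comp fun _ _ hij => hij
    · have hofFn : List.ofFn (fun i : Fin s.card => s.sort.get (i.cast hlen.symm)) = s.sort := by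
        rw [← List.ofFn_congr hlen, List.ofFn_get]
      simp only [Fin.univ_val_map, hofFn, Multiset.sort_eq]

theorem injOn_comp_perm_strictMono {β γ : Type*} [LinearOrder β] [WellFoundedLT β] [Preorder γ] :
    Set.InjOn (fun p : (β → γ) × Equiv.Perm β => p.1 ∘ p.2) {p | StrictMono p.1} := by
  rintro ⟨f, σ⟩ hf ⟨g, τ⟩ hg (h : f ∘ σ = g ∘ τ)
  obtain rfl : f = g := by
    rw [← StrictMono.range_inj hf hg, ← σ.surjective.range_comp f, h, τ.surjective.range_comp]
  have hστ : σ = τ := Equiv.ext fun i => StrictMono.injective hf (congrFun h i)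
  rw [hστ]

theorem card_finAntidiagonal (d n : ℕ) : #(finAntidiagonal d n) = d.multichoose n := by
  rw [← Fintype.card_fin d, ← Sym.card_sym_eq_multichoose, Fintype.card_fin]
  refine Finset.card_eq_of_equiv_fintype ?_
  exact (Equiv.subtypeEquivRight fun f => by simp).trans (Sym.equivNatSumOfFintype (Fin d) n).symm

theorem card_finAntidiagonal_succ (k n : ℕ) :
    #(finAntidiagonal (k + 1) n) = (n + k).choose k := by
  rw [card_finAntidiagonal, Nat.multichoose_eq, Nat.add_right_comm, Nat.add_sub_cancel,
    ← Nat.choose_symm_add, Nat.add_comm]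

/-- The monotone `r`-tuples of naturals with sum `m`. Zero entries are allowed, so these encode the
partitions of `m` into at most `r` parts, or of `m + r` into exactly `r` parts. -/
noncomputable def monotoneTuples (r m : ℕ) : Finset (Fin r → ℕ) :=
  open Classical in {f ∈ finAntidiagonal r m | Monotone f}

@[simp]
theorem mem_monotoneTuples {r m : ℕ} {f : Fin r → ℕ} :
    f ∈ monotoneTuples r m ↔ ∑ i, f i = m ∧ Monotone f := by
  simp [monotoneTuples]

theorem sum_fin_val_eq_choose_two (r : ℕ) : ∑ i : Fin r, (i : ℕ) = r.choose 2 := by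
  rw [Fin.sum_univ_eq_sum_range (fun i => i), sum_range_id, Nat.choose_two_right]

theorem card_finAntidiagonal_le_card_monotoneTuples_mul_factorial (r m : ℕ) :
    #(finAntidiagonal r m) ≤ #(monotoneTuples r m) * r.factorial := by
  calc #(finAntidiagonal r m) ≤ #(monotoneTuples r m ×ˢ (univ : Finset (Equiv.Perm (Fin r)))) := by
        refine card_le_card_of_surjOn (fun p => p.1 ∘ p.2) fun f hf => ?_
        refine ⟨(f ∘ Tuple.sort f, (Tuple.sort f).symm), ?_, by simp [Function.comp_assoc]⟩
        have hsum : ∑ i, f (Tuple.sort f i) = m :=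
          (Equiv.sum_comp _ f).trans (mem_finAntidiagonal.1 hf)
        simp [hsum, Tuple.monotone_sort]
    _ = #(monotoneTuples r m) * r.factorial := by
        rw [card_product, card_univ, Fintype.card_perm, Fintype.card_fin]

theorem card_monotoneTuples_mul_factorial_le_card_finAntidiagonal (r m : ℕ) :
    #(monotoneTuples r m) * r.factorial ≤ #(finAntidiagonal r (m + r.choose 2)) := by
  let spread (f : Fin r → ℕ) : Fin r → ℕ := fun i => f i + i
  have hspread {f} (hf : f ∈ monotoneTuples r m) : StrictMono (spread f) :=
    fun i j hij => add_lt_add_of_le_of_lt ((mem_monotoneTuples.1 hf).2 hij.le) hij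
  have spread_injective : Function.Injective spread := fun f g hfg =>
    funext fun i => Nat.add_right_cancel (congrFun hfg i)
  calc #(monotoneTuples r m) * r.factorial
      = #(monotoneTuples r m ×ˢ (univ : Finset (Equiv.Perm (Fin r)))) := by
        rw [card_product, card_univ, Fintype.card_perm, Fintype.card_fin]
    _ ≤ #(finAntidiagonal r (m + r.choose 2)) := by
        refine card_le_card_of_injOn (fun p => spread p.1 ∘ p.2) ?_ ?_
        · rintro ⟨f, σ⟩ hf
          have hf : f ∈ monotoneTuples r m := (mem_product.1 hf).1
          have hsum : ∑ i, spread f (σ i) = m + r.choose 2 := by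
            rw [Equiv.sum_comp σ (spread f), sum_add_distrib, (mem_monotoneTuples.1 hf).1,
              sum_fin_val_eq_choose_two]
          simpa using hsum
        · rintro ⟨f, σ⟩ hf ⟨g, τ⟩ hg h
          have hpair : (spread f, σ) = (spread g, τ) :=
            injOn_comp_perm_strictMono (hspread (mem_product.1 hf).1)
              (hspread (mem_product.1 hg).1) h
          obtain ⟨hfg, rfl⟩ := Prod.mk.inj hpair
          rw [spread_injective hfg]

theorem partitionCountParts_eq_ncard_monotone (n r : ℕ) :
    partitionCountParts n r =
      {f : Fin r → ℕ | Monotone f ∧ ∑ i, f i = n ∧ ∀ i, 0 < f i}.ncard := by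
  let toPartition (f : {f : Fin r → ℕ | Monotone f ∧ ∑ i, f i = n ∧ ∀ i, 0 < f i}) :
      {lam : Nat.Partition n // lam.parts.card = r} :=
    ⟨⟨univ.val.map f.1, by simpa using f.2.2.2, f.2.2.1⟩, by simp⟩
  refine (Nat.card_eq_of_bijective toPartition ⟨fun f g hfg => ?_, fun lam => ?_⟩).symm
  · have hparts : univ.val.map f.1 = univ.val.map g.1 := congrArg (fun lam => lam.1.parts) hfg
    exact Subtype.ext ((bijOn_univ_val_map_monotone ℕ r).injOn f.2.1 g.2.1 hparts)
  · obtain ⟨f, hf, hparts⟩ := (bijOn_univ_val_map_monotone ℕ r).surjOn lam.2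
    replace hparts : univ.val.map f = lam.1.parts := hparts
    have hsum : ∑ i, f i = n := (congrArg Multiset.sum hparts).trans lam.1.parts_sum
    have hpos (i : Fin r) : 0 < f i :=
      lam.1.parts_pos (hparts ▸ Multiset.mem_map_of_mem f (mem_univ_val i))
    exact ⟨⟨f, hf, hsum, hpos⟩, Subtype.ext (Nat.Partition.ext hparts)⟩

theorem partitionCountParts_add_self (m r : ℕ) :
    partitionCountParts (m + r) r = #(monotoneTuples r m) := by
  have himage : {f : Fin r → ℕ | Monotone f ∧ ∑ i, f i = m + r ∧ ∀ i, 0 < f i} =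
      (fun f => f + 1) '' (monotoneTuples r m : Set (Fin r → ℕ)) := by
    ext f
    constructor
    · rintro ⟨hf, hsum, hpos⟩
      have hsub_add : f - 1 + 1 = f := funext fun i => Nat.sub_add_cancel (hpos i)
      have hmono : Monotone (f - 1) := fun i j hij => Nat.sub_le_sub_right (hf hij) 1
      rw [← hsub_add] at hsum
      exact ⟨f - 1, mem_monotoneTuples.2 ⟨by simpa [sum_add_distrib] using hsum, hmono⟩, hsub_add⟩
    · rintro ⟨g, hg, rfl⟩
      obtain ⟨hsum, hg⟩ := mem_monotoneTuples.1 hg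
      exact ⟨hg.add_const 1, by simp [sum_add_distrib, hsum], fun i => Nat.succ_pos (g i)⟩
  rw [partitionCountParts_eq_ncard_monotone, himage,
    Set.ncard_image_of_injective _ (add_left_injective 1), Set.ncard_coe_finset]

theorem tendsto_choose_add_mul_factorial_div_pow (a b k : ℕ) :
    Tendsto (fun n : ℕ => ((n + a).choose k * k.factorial : ℝ) / ((n + b : ℕ) : ℝ) ^ k)
      atTop (𝓝 1) := by
  have hadd (c : ℕ) : (fun n : ℕ => ((n + c : ℕ) : ℝ)) ~[atTop] fun n : ℕ => (n : ℝ) := by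
    simpa using IsEquivalent.refl.add_const_of_norm_tendsto_atTop (c := (c : ℝ))
      (tendsto_norm_atTop_atTop.comp tendsto_natCast_atTop_atTop)
  have hchoose : (fun n : ℕ => ((n + a).choose k : ℝ)) ~[atTop]
      fun n : ℕ => ((n + b : ℕ) : ℝ) ^ k / k.factorial :=
    ((isEquivalent_choose k).comp_tendsto (tendsto_add_atTop_nat a)).trans
      ((((hadd a).trans (hadd b).symm).pow k).div .refl)
  have hne : ∀ᶠ n : ℕ in atTop, ((n + b : ℕ) : ℝ) ^ k / k.factorial ≠ 0 := by
    filter_upwards [eventually_gt_atTop 0] with n hn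
    positivity
  exact ((isEquivalent_iff_tendsto_one hne).1 hchoose).congr fun n => by simp [div_div_eq_mul_div]

/-- for fixed `r ≥ 1`, `p_{n,r} ~ n^{r-1}/(r!·(r-1)!)` as `n → ∞`,
i.e. `p_{n,r}·r!·(r-1)!/n^{r-1} → 1`. -/
theorem partition_parts_asymptotic (r : ℕ) (hr : 1 ≤ r) :
    Filter.Tendsto
      (fun n : ℕ => (partitionCountParts n r : ℝ) *
        ((r.factorial : ℝ) * ((r - 1).factorial : ℝ)) / (n : ℝ) ^ (r - 1))
      Filter.atTop (nhds 1) := by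
  obtain ⟨k, rfl⟩ := Nat.exists_eq_add_of_le' hr
  rw [← tendsto_add_atTop_iff_nat (k + 1)]
  simp only [partitionCountParts_add_self, Nat.add_sub_cancel, ← mul_assoc]
  refine tendsto_of_tendsto_of_tendsto_of_le_of_le
    (tendsto_choose_add_mul_factorial_div_pow k (k + 1) k)
    (tendsto_choose_add_mul_factorial_div_pow ((k + 1).choose 2 + k) (k + 1) k)
    (fun m => ?_) fun m => ?_
  · have hlower := card_finAntidiagonal_le_card_monotoneTuples_mul_factorial (k + 1) m
    rw [card_finAntidiagonal_succ] at hlower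
    dsimp only
    gcongr
    exact_mod_cast hlower
  · have hupper := card_monotoneTuples_mul_factorial_le_card_finAntidiagonal (k + 1) m
    rw [card_finAntidiagonal_succ, add_assoc] at hupper
    dsimp only
    gcongr
    exact_mod_cast hupper
end
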